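/- arXiv:1611.04547 — 2 statements merged into one kernel-verified Lean document; each statement's English description precedes it below -/
import Mathlib

section
/- Let (φ_n) be a normalized continuous potential sequence on X = ∏_{n≥0} A_n whose uniform variations r_k satisfy Berbee's condition, let μ be a Gibbs chain for (φ_n), and let π̂ : X → Y = ∏_{n≥0} Ã_n be a symbolic map. Then there exists a normalized continuous potential sequence (ψ_n) on Y such that the pushforward measure μ∘π̂⁻¹ is a Gibbs chain for (ψ_n). -/
/-!
Put `g_n = exp φ_n`. For `b ∈ B_n` the conditional probability, under `μ`, of `π(x_n) = b` given
the letters after `n` is `blockProb`, a continuous function of `(x_{n+1}, …)`. To condition only on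
the projected tail `y`, average this function over the words on the sites `n+1, …, n+j` lying in
the fibre of `y`, weighted by the product of the `g_k`, with an arbitrary boundary condition `x`
further to the right (`fibAvg`). The theorem follows once these averages are shown to converge, as
`j → ∞`, to a limit `q_n(b, y)` which does not depend on the boundary condition.

Loss of memory of the boundary condition comes from a renewal structure. Splitting each `g_k` into
the part known from finitely many coordinates (`gInf`) and the rest decomposes the weight of a word
according to the first offset in a given set `S` at which all weights so far have been obtained
without looking further right (`gProd_decomp`). At such a renewal the past decouples from the
future. The hypothesis on the variations gives `gInf g k (k + m) ≥ exp(-r_{m+1}) g_k`, and with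
`u_j = exp(-(r_1 + ⋯ + r_j))` a renewal in `S` is seen with probability at least
`∑_{e ∈ S} u_{e+1} / ∑_{j ≤ J} u_j` (`missTot_le`). Given two boundary conditions, split the offsets
in `[l, J)` according to which of them has the smaller renewal density. On each class the two
averages share the renewals of the smaller one. By Berbee's condition `J` can be chosen such that
`[l, J)` carries half of the mass of `u`, so one class carries a quarter, and the oscillation of a
function of the first `l` coordinates shrinks by the factor `3/4` (`fibAvg_contract`). Approximation
by functions of finitely many coordinates and iteration yield convergence, uniform in the boundary
condition (`fibAvg_tendsto`). Since averages up to a fixed horizon depend on finitely many letters of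
`y` and confine all later averages, the limit is continuous in `y` (`exists_continuous_limit`).

The potential of the factor is `ψ_n(y) = log q_n(y_n, y)`. Normalization and positivity pass to the
limit. For the Gibbs property, redrawing the letters of a block one by one (`integral_resample`)
shows that the fibre average over a block is the conditional expectation given the projected block
and the tail beyond it (`integral_mul_fibAvg`). Dominated convergence and a π-system argument
identify `q_n` with the conditional expectation given the projected tail (`setIntegral_limit`).
-/

open MeasureTheory Filter

/-- The σ-algebra on `X = ∏_{n≥0} A_n` generated by the coordinates `(x_m, x_{m+1}, …)`. -/
def tailAlgebra (A : ℕ → Type) [∀ n, MeasurableSpace (A n)] (m : ℕ) :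
    MeasurableSpace (∀ n, A n) :=
  MeasurableSpace.comap (fun (x : ∀ n, A n) (k : ℕ) => x (m + k)) MeasurableSpace.pi

/-- `(φ_n)` is a normalized continuous potential sequence on `X = ∏_{n≥0} A_n`:
each `φ_n` is continuous, depends only on the coordinates `(x_n, x_{n+1}, …)`
(i.e. it is a function of `x^{(n)}`), and `∑_{a ∈ A_n} exp(φ_n(a·x^{(n+1)})) = 1`. -/
def IsNormalizedPotential (A : ℕ → Type) [∀ n, Fintype (A n)]
    [∀ n, TopologicalSpace (A n)] (φ : ℕ → (∀ k, A k) → ℝ) : Prop :=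
  (∀ n, Continuous (φ n)) ∧
  (∀ n (x y : ∀ k, A k), (∀ k, n ≤ k → x k = y k) → φ n x = φ n y) ∧
  (∀ n (x : ∀ k, A k), ∑ a : A n, Real.exp (φ n (Function.update x n a)) = 1)

/-- `μ` is a Gibbs chain for `(φ_n)`: for every `n` and `a ∈ A_n` the function
`x ↦ exp(φ_n(a·x^{(n+1)}))` is a version of the conditional expectation of the
indicator of `{x_n = a}` given the σ-algebra generated by `(x_{n+1}, x_{n+2}, …)`. -/
def IsGibbsChain (A : ℕ → Type) [∀ n, MeasurableSpace (A n)]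
    (φ : ℕ → (∀ k, A k) → ℝ) (μ : Measure (∀ n, A n)) : Prop :=
  IsProbabilityMeasure μ ∧
    ∀ n (a : A n),
      (fun x : ∀ k, A k => Real.exp (φ n (Function.update x n a)))
        =ᵐ[μ]
      μ[Set.indicator {x : ∀ k, A k | x n = a} (fun _ => (1 : ℝ)) | tailAlgebra A (n + 1)]

/-! ### Fibre sums and the weights of words -/

open Classical in
/-- The unweighted sum of `f` over the letters at site `k` that project to `y k`. -/
noncomputable def fibSum {A B : ℕ → Type} [∀ n, Fintype (A n)] (p : ∀ n, A n → B n)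
    (y : ∀ k, B k) (k : ℕ) (f : (∀ k, A k) → ℝ) (x : ∀ k, A k) : ℝ :=
  ∑ a : A k, if p k a = y k then f (Function.update x k a) else 0

/-- The unweighted sum of `f` over all words on the sites `s, …, s + j - 1` that project to the
corresponding letters of `y`; outside these sites the configuration is `x`. -/
noncomputable def wordSum {A B : ℕ → Type} [∀ n, Fintype (A n)] (p : ∀ n, A n → B n)
    (y : ∀ k, B k) (s : ℕ) : ℕ → ((∀ k, A k) → ℝ) → (∀ k, A k) → ℝ
  | 0, f => f
  | j + 1, f => fibSum p y (s + j) (wordSum p y s j f)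

/-- The weight `∏_{i ≤ k < j} g (s + k)` of the sites `s + i, …, s + j - 1`, offsets being counted
from `s`. -/
def gProd {A : ℕ → Type} (g : ℕ → (∀ k, A k) → ℝ) (s i j : ℕ) (x : ∀ k, A k) : ℝ :=
  ∏ k ∈ Finset.Ico i j, g (s + k) x

/-- The infimum of `g k` over the configurations agreeing with `x` on `[k, e]`: the part of the
weight of site `k` that is known from the sites `k, …, e` alone. The set is nonempty and, for
`g > 0`, bounded below, so `sInf` is the true infimum. -/
noncomputable def gInf {A : ℕ → Type} (g : ℕ → (∀ k, A k) → ℝ) (k e : ℕ) (x : ∀ k, A k) : ℝ :=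
  sInf (g k '' {x' | ∀ j ∈ Set.Icc k e, x' j = x j})

/-- The part of the weight of the first `i` sites from `s` which is determined by the sites
`s, …, s + e` and contains no renewal at an offset of `S` below `i`. A renewal at offset `e`
is the event that the weights of all sites `s, …, s + e` were obtained without looking beyond
`s + e`. The value is meaningful for `i ≤ e + 1`. -/
noncomputable def missWt {A : ℕ → Type} (g : ℕ → (∀ k, A k) → ℝ) (s : ℕ) (S : Finset ℕ) :
    ℕ → ℕ → (∀ k, A k) → ℝ
  | 0, _, _ => 1
  | i + 1, e, x => missWt g s S i e x * gInf g (s + i) (s + e) x -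
      if i ∈ S then missWt g s S i i x * gInf g (s + i) (s + i) x else 0

/-- The weight of the event that the first renewal with offset in `S` happens at `i`. It depends
only on the sites `s, …, s + i`. -/
noncomputable def hitWt {A : ℕ → Type} (g : ℕ → (∀ k, A k) → ℝ) (s : ℕ) (S : Finset ℕ)
    (i : ℕ) (x : ∀ k, A k) : ℝ :=
  if i ∈ S then missWt g s S i i x * gInf g (s + i) (s + i) x else 0

/-- The full weight of the first `i` sites from `s` minus the contribution of all renewals with
offset in `S` below `i`; see `gProd_decomp`. -/
noncomputable def missTot {A : ℕ → Type} (g : ℕ → (∀ k, A k) → ℝ) (s : ℕ) (S : Finset ℕ) :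
    ℕ → (∀ k, A k) → ℝ
  | 0, _ => 1
  | i + 1, x => missTot g s S i x * g (s + i) x - hitWt g s S i x

section FibreSums

variable {A B : ℕ → Type} [∀ n, Fintype (A n)] (p : ∀ n, A n → B n) (y : ∀ k, B k)

lemma fibSum_mono {k : ℕ} {f f' : (∀ k, A k) → ℝ} (h : ∀ x, f x ≤ f' x) (x) :
    fibSum p y k f x ≤ fibSum p y k f' x := by
  classical
  unfold fibSum
  apply Finset.sum_le_sum
  intro a _
  split_ifs
  · exact h _
  · exact le_rfl

lemma wordSum_mono {s j : ℕ} {f f' : (∀ k, A k) → ℝ} (h : ∀ x, f x ≤ f' x) (x) :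
    wordSum p y s j f x ≤ wordSum p y s j f' x := by
  induction j generalizing x with
  | zero => exact h x
  | succ j ih => exact fibSum_mono p y ih x

lemma fibSum_add {k : ℕ} (f f' : (∀ k, A k) → ℝ) :
    fibSum p y k (fun x => f x + f' x) = fun x => fibSum p y k f x + fibSum p y k f' x := by
  classical
  funext x
  unfold fibSum
  rw [← Finset.sum_add_distrib]
  refine Finset.sum_congr rfl fun a _ => ?_
  split_ifs <;> simp

lemma wordSum_add {s j : ℕ} (f f' : (∀ k, A k) → ℝ) :
    wordSum p y s j (fun x => f x + f' x) =
      fun x => wordSum p y s j f x + wordSum p y s j f' x := by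
  induction j with
  | zero => rfl
  | succ j ih => simp only [wordSum, ih, fibSum_add]

/-- Factors depending only on the coordinates to the right of the summed word can be
pulled out of the sum. -/
lemma wordSum_pull {s j : ℕ} (q f : (∀ k, A k) → ℝ) (hq : DependsOn q (Set.Ici (s + j))) :
    wordSum p y s j (fun x => q x * f x) = fun x => q x * wordSum p y s j f x := by
  classical
  induction j with
  | zero => rfl
  | succ j ih =>
    have hq' : DependsOn q (Set.Ici (s + j)) := fun x x' h =>
      hq fun i hi => h i (by simp only [Set.mem_Ici] at hi ⊢; omega)
    simp only [wordSum, ih hq']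
    funext x
    unfold fibSum
    rw [Finset.mul_sum]
    refine Finset.sum_congr rfl fun a _ => ?_
    have : q (Function.update x (s + j) a) = q x := hq fun i hi => by
      simp only [Set.mem_Ici] at hi
      exact Function.update_of_ne (by omega) _ _
    simp only [this]
    split_ifs <;> simp

lemma wordSum_const_mul {s j : ℕ} (c : ℝ) (f : (∀ k, A k) → ℝ) :
    wordSum p y s j (fun x => c * f x) = fun x => c * wordSum p y s j f x :=
  wordSum_pull p y (fun _ => c) f fun _ _ _ => rfl

lemma wordSum_sum {ι : Type*} (I : Finset ι) {s j : ℕ} (f : ι → (∀ k, A k) → ℝ) :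
    wordSum p y s j (fun x => ∑ i ∈ I, f i x) = fun x => ∑ i ∈ I, wordSum p y s j (f i) x := by
  classical
  induction I using Finset.induction_on with
  | empty =>
    have := wordSum_const_mul p y (s := s) (j := j) 0 (fun _ => 0)
    simpa using this
  | insert a I ha ih => simp only [Finset.sum_insert ha, wordSum_add, ih]

lemma wordSum_split (s i j : ℕ) (f : (∀ k, A k) → ℝ) :
    wordSum p y s (i + j) f = wordSum p y (s + i) j (wordSum p y s i f) := by
  induction j with
  | zero => rfl
  | succ j ih =>
    rw [← Nat.add_assoc]
    simp only [wordSum, ih]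
    rw [Nat.add_assoc]

lemma fibSum_dependsOn {k : ℕ} {f : (∀ k, A k) → ℝ} {K K' : Set ℕ} (hf : DependsOn f K)
    (hK : K ⊆ insert k K') : DependsOn (fibSum p y k f) K' := by
  classical
  intro x x' h
  unfold fibSum
  refine Finset.sum_congr rfl fun a _ => ?_
  have : f (Function.update x k a) = f (Function.update x' k a) := hf fun i hi => by
    by_cases hik : i = k
    · subst hik; simp
    · rw [Function.update_of_ne hik, Function.update_of_ne hik]
      exact h i ((hK hi).resolve_left hik)
  rw [this]

lemma wordSum_dependsOn {s j : ℕ} {f : (∀ k, A k) → ℝ} {K K' : Set ℕ} (hf : DependsOn f K)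
    (hK : K ⊆ Set.Ico s (s + j) ∪ K') : DependsOn (wordSum p y s j f) K' := by
  induction j generalizing K' with
  | zero => exact fun x x' h => hf fun i hi => h i (by simpa using hK hi)
  | succ j ih =>
    refine fibSum_dependsOn p y (ih (K' := insert (s + j) K') fun i hi => ?_) le_rfl
    rcases hK hi with h | h
    · by_cases hij : i = s + j
      · right; left; exact hij
      · left; simp only [Set.mem_Ico] at h ⊢; omega
    · right; right; exact h

lemma wordSum_pos (hp : ∀ n, Function.Surjective (p n)) {s j : ℕ} {f : (∀ k, A k) → ℝ}
    (hf : ∀ x, 0 < f x) (x) : 0 < wordSum p y s j f x := by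
  classical
  induction j generalizing x with
  | zero => exact hf x
  | succ j ih =>
    obtain ⟨a, ha⟩ := hp (s + j) (y (s + j))
    refine Finset.sum_pos' (fun b _ => ?_) ⟨a, Finset.mem_univ _, ?_⟩
    · split_ifs
      · exact (ih _).le
      · exact le_rfl
    · rw [if_pos ha]; exact ih _

end FibreSums

/-! ### Renewal decomposition of the weights -/

section Weights

variable {A : ℕ → Type} {g : ℕ → (∀ k, A k) → ℝ} (hg : ∀ k x, 0 < g k x)
include hg

lemma gInf_bdd (k e : ℕ) (x : ∀ k, A k) :
    BddBelow (g k '' {x' | ∀ j ∈ Set.Icc k e, x' j = x j}) :=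
  ⟨0, by rintro _ ⟨x', -, rfl⟩; exact (hg k x').le⟩

lemma gInf_nonneg (k e : ℕ) (x : ∀ k, A k) : 0 ≤ gInf g k e x :=
  Real.sInf_nonneg (by rintro _ ⟨x', -, rfl⟩; exact (hg k x').le)

lemma gInf_le (k e : ℕ) (x : ∀ k, A k) : gInf g k e x ≤ g k x :=
  csInf_le (gInf_bdd hg k e x) ⟨x, fun _ _ => rfl, rfl⟩

lemma gInf_mono (k : ℕ) {e e' : ℕ} (h : e ≤ e') (x : ∀ k, A k) :
    gInf g k e x ≤ gInf g k e' x := by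
  refine csInf_le_csInf (gInf_bdd hg k e x) ⟨_, x, fun _ _ => rfl, rfl⟩ ?_
  apply Set.image_mono
  intro x' hx' j hj
  exact hx' j ⟨hj.1, hj.2.trans h⟩

omit hg in
lemma gInf_dependsOn (k e : ℕ) : DependsOn (gInf g k e) (Set.Icc k e) := by
  intro x x' h
  unfold gInf
  congr 2
  ext w
  constructor
  · intro hw j hj; rw [hw j hj, h j hj]
  · intro hw j hj; rw [hw j hj, h j hj]

variable (s : ℕ) (S : Finset ℕ)

/-- Looking further to the right increases the known weight, so that subtracting the weight of
the renewals keeps everything nonnegative. -/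
lemma missWt_nonneg_mono (x : ∀ k, A k) (i : ℕ) : ∀ e, i ≤ e + 1 →
    0 ≤ missWt g s S i e x ∧ (∀ e', e ≤ e' → missWt g s S i e x ≤ missWt g s S i e' x) ∧
      missWt g s S i e x ≤ missTot g s S i x := by
  induction i with
  | zero => intro e _; simp [missWt, missTot]
  | succ i ih =>
    intro e he
    have hG := gInf_nonneg hg
    have key : ∀ e, i ≤ e → 0 ≤ missWt g s S (i + 1) e x := by
      intro e he
      obtain ⟨h0, h1, -⟩ := ih i (by omega)
      have := mul_le_mul (h1 e he) (gInf_mono hg (s + i) (Nat.add_le_add_left he s) x)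
        (hG _ _ _) (h0.trans (h1 e he))
      have h2 := mul_nonneg (ih e (by omega)).1 (hG (s + i) (s + e) x)
      simp only [missWt]
      split_ifs <;> linarith
    obtain ⟨h0, h1, h2⟩ := ih e (by omega)
    refine ⟨key e (by omega), fun e' he' => ?_, ?_⟩
    · simp only [missWt]
      gcongr
      · exact hG _ _ _
      · exact h0.trans (h1 e' he')
      · exact h1 e' he'
      · exact gInf_mono hg (s + i) (Nat.add_le_add_left he' s) x
    · simp only [missWt, missTot, hitWt]
      gcongr
      · exact hG _ _ _
      · exact h0.trans h2
      · exact gInf_le hg _ _ _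

lemma missTot_nonneg (i : ℕ) (x : ∀ k, A k) : 0 ≤ missTot g s S i x := by
  obtain ⟨h0, -, h⟩ := missWt_nonneg_mono hg s S x i i (by omega)
  exact h0.trans h

lemma hitWt_nonneg (i : ℕ) (x : ∀ k, A k) : 0 ≤ hitWt g s S i x := by
  unfold hitWt
  split_ifs
  · exact mul_nonneg (missWt_nonneg_mono hg s S x i i (by omega)).1 (gInf_nonneg hg _ _ _)
  · exact le_rfl

omit hg in
lemma missWt_dependsOn (i : ℕ) : ∀ e, i ≤ e + 1 →
    DependsOn (missWt g s S i e) (Set.Icc s (s + e)) := by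
  induction i with
  | zero => intro e _ x x' _; rfl
  | succ i ih =>
    intro e he x x' h
    have h1 := ih e (by omega) h
    have h2 : missWt g s S i i x = missWt g s S i i x' :=
      ih i (by omega) fun j hj => h j ⟨hj.1, by have := hj.2; omega⟩
    have h3 : gInf g (s + i) (s + e) x = gInf g (s + i) (s + e) x' :=
      gInf_dependsOn _ _ fun j hj => h j ⟨by have := hj.1; omega, hj.2⟩
    have h4 : gInf g (s + i) (s + i) x = gInf g (s + i) (s + i) x' :=
      gInf_dependsOn _ _ fun j hj => h j ⟨by have := hj.1; omega, by have := hj.2; omega⟩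
    simp only [missWt, h1, h2, h3, h4]

omit hg in
lemma hitWt_dependsOn (i : ℕ) : DependsOn (hitWt g s S i) (Set.Icc s (s + i)) := by
  intro x x' h
  have h2 := missWt_dependsOn (g := g) s S i i (by omega) h
  have h4 : gInf g (s + i) (s + i) x = gInf g (s + i) (s + i) x' :=
      gInf_dependsOn _ _ fun j hj => h j ⟨by have := hj.1; omega, by have := hj.2; omega⟩
  simp only [hitWt, h2, h4]

omit hg in
/-- Decomposition of the weight of a word according to the first renewal in `S`. -/
lemma gProd_decomp (i : ℕ) (x : ∀ k, A k) :
    gProd g s 0 i x = missTot g s S i x +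
      ∑ k ∈ Finset.range i, hitWt g s S k x * gProd g s (k + 1) i x := by
  induction i with
  | zero => simp [gProd, missTot]
  | succ i ih =>
    have h1 : ∀ k ≤ i, gProd g s k (i + 1) x = gProd g s k i x * g (s + i) x := fun k hk => by
      unfold gProd; rw [Finset.prod_Ico_succ_top hk]
    have h2 : ∑ k ∈ Finset.range i, hitWt g s S k x * gProd g s (k + 1) (i + 1) x =
        (∑ k ∈ Finset.range i, hitWt g s S k x * gProd g s (k + 1) i x) * g (s + i) x := by
      rw [Finset.sum_mul]
      refine Finset.sum_congr rfl fun k hk => ?_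
      rw [h1 (k + 1) (by simpa using hk)]; ring
    rw [Finset.sum_range_succ, h2, h1 0 (by omega), ih]
    have : gProd g s (i + 1) (i + 1) x = 1 := by simp [gProd]
    rw [this, missTot]; ring

/-- The renewal estimate. Let `u_j = ∏_{m < j} f₀ m`, where `f₀ m` is a lower bound for the ratio of
the values of any `g k` at configurations agreeing in the `m + 1` coordinates from `k` on. If
`c` is at most the inverse of `u_0 + ⋯ + u_J`, the relative weight of the words without
renewal in `S` is at most `1 - c ∑_{e ∈ S} u_{e+1}`. In particular a set `S`
carrying a fixed proportion of the mass of
`u` is hit with probability bounded below, uniformly in the configuration. -/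
lemma missTot_le (f₀ : ℕ → ℝ) (hf₀ : ∀ m, 0 ≤ f₀ m)
    (hvar : ∀ k m x x', (∀ j ∈ Set.Icc k (k + m), x' j = x j) → f₀ m * g k x ≤ g k x')
    (J : ℕ) (hS : S ⊆ Finset.range J) (c : ℝ) (hc : 0 ≤ c)
    (hcu : c * ∑ j ∈ Finset.range (J + 1), ∏ m ∈ Finset.range j, f₀ m ≤ 1)
    (x : ∀ k, A k) :
    missTot g s S J x ≤
      (1 - c * ∑ e ∈ S, ∏ m ∈ Finset.range (e + 1), f₀ m) * gProd g s 0 J x := by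
  set u : ℕ → ℝ := fun j => ∏ m ∈ Finset.range j, f₀ m with hu
  have hu0 : ∀ j, 0 ≤ u j := fun j => Finset.prod_nonneg fun m _ => hf₀ m
  have hG : ∀ k m, f₀ m * g k x ≤ gInf g k (k + m) x := fun k m =>
    le_csInf ⟨_, x, fun _ _ => rfl, rfl⟩ (by rintro _ ⟨w, hw, rfl⟩; exact hvar k m x w hw)
  -- After `i` sites, the weight already renewed plus `c` times the sum over `e ∈ S`, `e ≥ i`, of the
  -- weight still known at `e`, discounted by `u (e + 1 - i)`, keeps its initial proportion of the
  -- total weight. At `i = J` the sum is empty.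
  have key : ∀ i ≤ J, (c * ∑ e ∈ S, u (e + 1)) * gProd g s 0 i x ≤
      gProd g s 0 i x - missTot g s S i x +
        c * ∑ e ∈ S with i ≤ e, u (e + 1 - i) * missWt g s S i e x := by
    intro i
    induction i with
    | zero => intro _; simp [gProd, missTot, missWt]
    | succ i ih =>
      intro hi
      have ih := ih (by omega)
      have hP : gProd g s 0 (i + 1) x = gProd g s 0 i x * g (s + i) x := by
        unfold gProd; rw [Finset.prod_Ico_succ_top (by omega)]
      set T := hitWt g s S i x with hT
      have hT0 : 0 ≤ T := hitWt_nonneg hg s S i x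
      set gi := g (s + i) x
      have hgi : 0 < gi := hg _ _
      have hsum1 : (∑ e ∈ S with i + 1 ≤ e, u (e + 1 - i) * missWt g s S i e x) * gi -
          T * ∑ e ∈ S with i + 1 ≤ e, u (e + 1 - (i + 1)) ≤
          ∑ e ∈ S with i + 1 ≤ e, u (e + 1 - (i + 1)) * missWt g s S (i + 1) e x := by
        rw [Finset.sum_mul, Finset.mul_sum, ← Finset.sum_sub_distrib]
        refine Finset.sum_le_sum fun e he => ?_
        have he' : i + 1 ≤ e := (Finset.mem_filter.mp he).2
        obtain ⟨m, rfl⟩ := Nat.exists_eq_add_of_le (show i ≤ e by omega)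
        have e1 : i + m + 1 - i = m + 1 := by omega
        have e2 : i + m + 1 - (i + 1) = m := by omega
        have h1 : u (m + 1) = u m * f₀ m := by rw [hu]; simp [Finset.prod_range_succ]
        have h2 : missWt g s S (i + 1) (i + m) x =
            missWt g s S i (i + m) x * gInf g (s + i) (s + i + m) x - T := by
          rw [missWt, hT, hitWt, Nat.add_assoc]
        rw [e1, e2, h1, h2]
        have h3 := (missWt_nonneg_mono hg s S x i (i + m) (by omega)).1
        have h4 := mul_le_mul_of_nonneg_left (hG (s + i) m) (mul_nonneg (hu0 m) h3)
        nlinarith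
      have hsum2 : c * ∑ e ∈ S with i + 1 ≤ e, u (e + 1 - (i + 1)) ≤ 1 - c := by
        have : 1 + ∑ e ∈ S with i + 1 ≤ e, u (e + 1 - (i + 1)) ≤
            ∑ j ∈ Finset.range (J + 1), u j := by
          rw [Finset.sum_range_succ', add_comm]
          have : u 0 = 1 := by simp [hu]
          rw [this]
          gcongr
          have hinj : Set.InjOn (fun e => e - i - 1) (S.filter (fun e => i + 1 ≤ e) : Set ℕ) := by
            intro e he e' he' h
            have := (Finset.mem_filter.mp he).2
            have := (Finset.mem_filter.mp he').2
            simp only at h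
            omega
          calc ∑ e ∈ S with i + 1 ≤ e, u (e + 1 - (i + 1))
              = ∑ j ∈ (S.filter (fun e => i + 1 ≤ e)).image (fun e => e - i - 1), u (j + 1) := by
                rw [Finset.sum_image hinj]
                refine Finset.sum_congr rfl fun e he => ?_
                have := (Finset.mem_filter.mp he).2
                congr 1; omega
            _ ≤ ∑ j ∈ Finset.range J, u (j + 1) := by
                refine Finset.sum_le_sum_of_subset_of_nonneg ?_ fun j _ _ => hu0 _
                intro j hj
                obtain ⟨e, he, rfl⟩ := Finset.mem_image.mp hj
                have := Finset.mem_range.mp (hS (Finset.mem_filter.mp he).1)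
                simp only [Finset.mem_range]; omega
        have := mul_le_mul_of_nonneg_left this hc
        linarith
      have hsplit : c * ∑ e ∈ S with i ≤ e, u (e + 1 - i) * missWt g s S i e x * gi ≤
          c * (∑ e ∈ S with i + 1 ≤ e, u (e + 1 - i) * missWt g s S i e x) * gi + c * T := by
        by_cases hiS : i ∈ S
        · have : S.filter (fun e => i ≤ e) = insert i (S.filter (fun e => i + 1 ≤ e)) := by
            ext e
            simp only [Finset.mem_filter, Finset.mem_insert]
            constructor
            · rintro ⟨h1, h2⟩
              rcases h2.eq_or_lt with h | h
              · left; exact h.symm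
              · right; exact ⟨h1, h⟩
            · rintro (rfl | ⟨h1, h2⟩)
              · exact ⟨hiS, le_rfl⟩
              · exact ⟨h1, by omega⟩
          rw [this, Finset.sum_insert (by simp), mul_add, ← Finset.sum_mul]
          have hT' : T = missWt g s S i i x * gInf g (s + i) (s + i) x := by
            rw [hT, hitWt, if_pos hiS]
          have h1 : u (i + 1 - i) = f₀ 0 := by
            rw [show i + 1 - i = 1 by omega]; simp [hu]
          have h3 := (missWt_nonneg_mono hg s S x i i (by omega)).1
          have h4 := mul_le_mul_of_nonneg_left (hG (s + i) 0) h3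
          rw [h1, hT']
          have := mul_le_mul_of_nonneg_left h4 hc
          simp only [Nat.add_zero] at this
          nlinarith
        · have : S.filter (fun e => i ≤ e) = S.filter (fun e => i + 1 ≤ e) := by
            ext e
            simp only [Finset.mem_filter]
            constructor
            · rintro ⟨h1, h2⟩
              refine ⟨h1, Nat.lt_of_le_of_ne h2 ?_⟩
              rintro rfl; exact hiS h1
            · rintro ⟨h1, h2⟩; exact ⟨h1, by omega⟩
          rw [this, ← Finset.sum_mul, mul_assoc]
          have := mul_nonneg hc hT0
          linarith
      rw [hP, missTot, ← hT]
      have h5 := mul_le_mul_of_nonneg_left hsum1 hc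
      have h6 := mul_le_mul_of_nonneg_left hsum2 hT0
      have h7 := mul_le_mul_of_nonneg_right ih hgi.le
      rw [← Finset.sum_mul] at hsplit
      nlinarith
  have := key J le_rfl
  have hempty : S.filter (fun e => J ≤ e) = ∅ := by
    ext e
    simp only [Finset.mem_filter, Finset.notMem_empty, iff_false, not_and, not_le]
    intro he; exact Finset.mem_range.mp (hS he)
  rw [hempty, Finset.sum_empty] at this
  linarith

end Weights

/-! ### Fibre averages and their contraction -/

/-- The average of `f` over the words on the sites `s, …, s + J - 1` in the fibre of `y`, weighted
by `g` and with boundary condition `x` to the right: the conditional expectation of `f` under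
the specification given by `g`, given the tail of `x` and the projected word. -/
noncomputable def fibAvg {A B : ℕ → Type} [∀ n, Fintype (A n)] (p : ∀ n, A n → B n)
    (g : ℕ → (∀ k, A k) → ℝ) (y : ∀ k, B k) (s J : ℕ) (f : (∀ k, A k) → ℝ) (x : ∀ k, A k) : ℝ :=
  wordSum p y s J (fun w => gProd g s 0 J w * f w) x / wordSum p y s J (gProd g s 0 J) x

section Averages

variable {A B : ℕ → Type} [∀ n, Fintype (A n)] {p : ∀ n, A n → B n}
  {g : ℕ → (∀ k, A k) → ℝ}

omit [∀ n, Fintype (A n)] in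
lemma gProd_pos (hg : ∀ k x, 0 < g k x) (s i j : ℕ) (x : ∀ k, A k) : 0 < gProd g s i j x :=
  Finset.prod_pos fun _ _ => hg _ _

omit [∀ n, Fintype (A n)] in
lemma gProd_dependsOn (hdep : ∀ k, DependsOn (g k) (Set.Ici k)) (s i j : ℕ) :
    DependsOn (gProd g s i j) (Set.Ici (s + i)) := by
  intro x x' h
  unfold gProd
  refine Finset.prod_congr rfl fun k hk => hdep _ fun n hn => h n ?_
  have := (Finset.mem_Ico.mp hk).1
  simp only [Set.mem_Ici] at hn ⊢
  omega

variable (hp : ∀ n, Function.Surjective (p n)) (hg : ∀ k x, 0 < g k x) (y : ∀ k, B k)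
include hp hg

lemma fibAvg_mono {s J : ℕ} {f f' : (∀ k, A k) → ℝ} (h : ∀ x, f x ≤ f' x) (x) :
    fibAvg p g y s J f x ≤ fibAvg p g y s J f' x := by
  unfold fibAvg
  have := wordSum_pos p y hp (s := s) (j := J) (gProd_pos hg s 0 J) x
  gcongr
  exact wordSum_mono p y (fun w => mul_le_mul_of_nonneg_left (h w) (gProd_pos hg s 0 J w).le) x

lemma fibAvg_affine {s J : ℕ} (f : (∀ k, A k) → ℝ) (a b : ℝ) (x) :
    fibAvg p g y s J (fun w => a + b * f w) x = a + b * fibAvg p g y s J f x := by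
  have hZ := wordSum_pos p y hp (s := s) (j := J) (gProd_pos hg s 0 J) x
  unfold fibAvg
  have : (fun w => gProd g s 0 J w * (a + b * f w)) =
      fun w => a * gProd g s 0 J w + b * (gProd g s 0 J w * f w) := by funext w; ring
  rw [this, wordSum_add, wordSum_const_mul, wordSum_const_mul]
  field_simp

lemma fibAvg_const {s J : ℕ} (a : ℝ) (x) : fibAvg p g y s J (fun _ => a) x = a := by
  have := fibAvg_affine hp hg y (s := s) (J := J) (fun _ => 0) a 0 x
  simpa using this

lemma fibAvg_close {s J : ℕ} {f f' : (∀ k, A k) → ℝ} {ε : ℝ} (h : ∀ x, |f x - f' x| ≤ ε) (x) :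
    |fibAvg p g y s J f x - fibAvg p g y s J f' x| ≤ ε := by
  have h1 := fibAvg_mono hp hg y (s := s) (J := J) (f := f) (f' := fun w => ε + 1 * f' w)
    (fun w => by have := (abs_le.mp (h w)).2; linarith) x
  have h2 := fibAvg_mono hp hg y (s := s) (J := J) (f := f') (f' := fun w => ε + 1 * f w)
    (fun w => by have := (abs_le.mp (h w)).1; linarith) x
  rw [fibAvg_affine hp hg y] at h1 h2
  rw [abs_le]; constructor <;> linarith

omit hp hg in
/-- After a renewal at offset `k` past and future decouple: `h` sees only the sites up to `s + k`,
while the remaining weight sees only the sites after it. -/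
lemma wordSum_factor (hdep : ∀ k, DependsOn (g k) (Set.Ici k)) {s k J : ℕ} (hk : k < J)
    {h : (∀ k, A k) → ℝ} (hh : DependsOn h (Set.Icc s (s + k))) (w₀ w : ∀ k, A k) :
    wordSum p y s J (fun x => gProd g s (k + 1) J x * h x) w =
      wordSum p y s (k + 1) h w₀ *
        wordSum p y (s + (k + 1)) (J - (k + 1)) (gProd g s (k + 1) J) w := by
  obtain ⟨d, rfl⟩ := Nat.exists_eq_add_of_le (show k + 1 ≤ J from hk)
  rw [wordSum_split, wordSum_pull _ _ _ _ (gProd_dependsOn hdep s (k + 1) _)]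
  have hc : ∀ x, wordSum p y s (k + 1) h x = wordSum p y s (k + 1) h w₀ := fun x =>
    wordSum_dependsOn p y hh (K' := ∅) (fun i hi => Or.inl ⟨hi.1, by have := hi.2; omega⟩)
      (fun i hi => hi.elim)
  simp only [hc]
  rw [Nat.add_sub_cancel_left, ← congrFun (wordSum_const_mul p y _ _) w]
  congr 1
  funext x; ring

/-- A minorant of the fibre average that depends on the boundary condition `w` only through the
renewal densities bounded below by `a`. Two boundary conditions sharing such bounds share the
minorant. -/
lemma hit_le_fibAvg (hdep : ∀ k, DependsOn (g k) (Set.Ici k)) {s l J : ℕ} {S : Finset ℕ}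
    (hS : S ⊆ Finset.Ico l J) {f : (∀ k, A k) → ℝ} (hf : DependsOn f (Set.Ico s (s + l)))
    (hf0 : ∀ x, 0 ≤ f x) (w₀ w : ∀ k, A k) (a : ℕ → ℝ)
    (ha : ∀ k ∈ S, a k ≤ wordSum p y (s + (k + 1)) (J - (k + 1)) (gProd g s (k + 1) J) w /
      wordSum p y s J (gProd g s 0 J) w) :
    ∑ k ∈ S, wordSum p y s (k + 1) (fun x => hitWt g s S k x * f x) w₀ * a k ≤
      fibAvg p g y s J f w := by
  have hZ := wordSum_pos p y hp (s := s) (j := J) (gProd_pos hg s 0 J) w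
  have h1 : ∀ x, ∑ k ∈ S, gProd g s (k + 1) J x * (hitWt g s S k x * f x) ≤
      gProd g s 0 J x * f x := by
    intro x
    have hsub : ∑ k ∈ S, hitWt g s S k x * gProd g s (k + 1) J x ≤
        ∑ k ∈ Finset.range J, hitWt g s S k x * gProd g s (k + 1) J x :=
      Finset.sum_le_sum_of_subset_of_nonneg
        (fun k hk => by have := Finset.mem_Ico.mp (hS hk); simp only [Finset.mem_range]; omega)
        (fun k _ _ => mul_nonneg (hitWt_nonneg hg s S k x) (gProd_pos hg _ _ _ _).le)
    have := missTot_nonneg hg s S J x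
    have h2 : ∑ k ∈ S, gProd g s (k + 1) J x * (hitWt g s S k x * f x) =
        (∑ k ∈ S, hitWt g s S k x * gProd g s (k + 1) J x) * f x := by
      rw [Finset.sum_mul]; exact Finset.sum_congr rfl fun k _ => by ring
    rw [h2, gProd_decomp s S J x]
    exact mul_le_mul_of_nonneg_right (by linarith) (hf0 x)
  have h2 := wordSum_mono p y (s := s) (j := J) h1 w
  rw [wordSum_sum] at h2
  unfold fibAvg
  rw [le_div_iff₀ hZ]
  refine le_trans ?_ h2
  rw [Finset.sum_mul]
  refine Finset.sum_le_sum fun k hk => ?_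
  have hkJ := Finset.mem_Ico.mp (hS hk)
  have hd : DependsOn (fun x => hitWt g s S k x * f x) (Set.Icc s (s + k)) := by
    intro x x' h
    have e1 := hitWt_dependsOn (g := g) s S k h
    have e2 : f x = f x' := hf fun i hi => h i ⟨hi.1, by have := hi.2; omega⟩
    simp only [e1, e2]
  rw [wordSum_factor y hdep hkJ.2 hd w₀ w, mul_assoc]
  have ht : 0 ≤ wordSum p y s (k + 1) (fun x => hitWt g s S k x * f x) w₀ := by
    have := wordSum_mono p y (s := s) (j := k + 1) (f := fun _ => 0 * (0 : ℝ))
      (f' := fun x => hitWt g s S k x * f x)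
      (fun x => by simpa using mul_nonneg (hitWt_nonneg hg s S k x) (hf0 x)) w₀
    rw [wordSum_const_mul] at this
    simpa using this
  have := ha k hk
  rw [le_div_iff₀ hZ] at this
  exact mul_le_mul_of_nonneg_left this ht

/-- If the renewal densities for `z` are dominated on `S` by those for `z'`, the two averages have
the renewals of `z` in `S` in common, and by `missTot_le` this common part has mass at least
`c ∑_{e ∈ S} u_{e+1}`. -/
lemma fibAvg_contract_aux (hdep : ∀ k, DependsOn (g k) (Set.Ici k))
    (f₀ : ℕ → ℝ) (hf₀ : ∀ m, 0 ≤ f₀ m)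
    (hvar : ∀ k m x x', (∀ j ∈ Set.Icc k (k + m), x' j = x j) → f₀ m * g k x ≤ g k x')
    {s l J : ℕ} {S : Finset ℕ}
    (hS : S ⊆ Finset.Ico l J) {f : (∀ k, A k) → ℝ} (hf : DependsOn f (Set.Ico s (s + l)))
    {a b : ℝ} (hfa : ∀ x, a ≤ f x) (hfb : ∀ x, f x ≤ b) (z z' : ∀ k, A k)
    (hle : ∀ k ∈ S, wordSum p y (s + (k + 1)) (J - (k + 1)) (gProd g s (k + 1) J) z /
      wordSum p y s J (gProd g s 0 J) z ≤
        wordSum p y (s + (k + 1)) (J - (k + 1)) (gProd g s (k + 1) J) z' /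
      wordSum p y s J (gProd g s 0 J) z')
    (c : ℝ) (hc : 0 ≤ c)
    (hcu : c * ∑ j ∈ Finset.range (J + 1), ∏ m ∈ Finset.range j, f₀ m ≤ 1) :
    |fibAvg p g y s J f z - fibAvg p g y s J f z'| ≤
      (1 - c * ∑ e ∈ S, ∏ m ∈ Finset.range (e + 1), f₀ m) * (b - a) := by
  have hZ := wordSum_pos p y hp (s := s) (j := J) (gProd_pos hg s 0 J) z
  set α : ℕ → ℝ := fun k => wordSum p y (s + (k + 1)) (J - (k + 1)) (gProd g s (k + 1) J) z /
      wordSum p y s J (gProd g s 0 J) z with hα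
  -- `com F` is the part of the average of `F` common to the boundary conditions `z` and `z'`.
  set com : ((∀ k, A k) → ℝ) → ℝ := fun F =>
    ∑ k ∈ S, wordSum p y s (k + 1) (fun x => hitWt g s S k x * F x) z * α k with hcom
  have hlow : ∀ F : (∀ k, A k) → ℝ, DependsOn F (Set.Ico s (s + l)) → (∀ x, 0 ≤ F x) →
      com F ≤ fibAvg p g y s J F z ∧ com F ≤ fibAvg p g y s J F z' := fun F hF hF0 =>
    ⟨hit_le_fibAvg hp hg y hdep hS hF hF0 z z α fun k _ => le_rfl,
      hit_le_fibAvg hp hg y hdep hS hF hF0 z z' α hle⟩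
  have hlin : ∀ u v : ℝ, com (fun x => u + v * f x) = u * com (fun _ => 1) + v * com f := by
    intro u v
    simp only [hcom, Finset.mul_sum]
    rw [← Finset.sum_add_distrib]
    refine Finset.sum_congr rfl fun k _ => ?_
    have : (fun x => hitWt g s S k x * (u + v * f x)) =
      fun x => u * (hitWt g s S k x * 1) + v * (hitWt g s S k x * f x) := by funext x; ring
    rw [this, wordSum_add, wordSum_const_mul, wordSum_const_mul]
    ring
  have hmass : c * ∑ e ∈ S, ∏ m ∈ Finset.range (e + 1), f₀ m ≤ com (fun _ => 1) := by
    set κ := c * ∑ e ∈ S, ∏ m ∈ Finset.range (e + 1), f₀ m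
    have hS' : S ⊆ Finset.range J := fun k hk => by
      have := Finset.mem_Ico.mp (hS hk); simp only [Finset.mem_range]; omega
    have h1 := fun x => missTot_le hg s S f₀ hf₀ hvar J hS' c hc hcu x
    have h2 : ∀ x, κ * gProd g s 0 J x ≤
        ∑ k ∈ S, gProd g s (k + 1) J x * hitWt g s S k x := by
      intro x
      have h3 := gProd_decomp (g := g) s S J x
      have h4 : ∑ k ∈ S, gProd g s (k + 1) J x * hitWt g s S k x =
          ∑ k ∈ Finset.range J, hitWt g s S k x * gProd g s (k + 1) J x := by
        rw [← Finset.sum_subset hS' (fun k _ hk => by simp [hitWt, hk])]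
        exact Finset.sum_congr rfl fun k _ => mul_comm _ _
      have h5 := h1 x
      rw [h4]; linarith
    have h3 := wordSum_mono p y (s := s) (j := J) h2 z
    rw [wordSum_const_mul, wordSum_sum] at h3
    have h4 : ∑ k ∈ S, wordSum p y s J (fun x => gProd g s (k + 1) J x * hitWt g s S k x) z =
        com (fun _ => 1) * wordSum p y s J (gProd g s 0 J) z := by
      rw [hcom, Finset.sum_mul]
      refine Finset.sum_congr rfl fun k hk => ?_
      rw [wordSum_factor y hdep (Finset.mem_Ico.mp (hS hk)).2 (hitWt_dependsOn s S k) z z]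
      simp only [mul_one, hα]
      field_simp
    beta_reduce at h3
    rw [h4] at h3
    exact le_of_mul_le_mul_right h3 hZ
  have hdA : ∀ u v : ℝ, DependsOn (fun x => u + v * f x) (Set.Ico s (s + l)) :=
    fun u v x x' h => by simp only [hf h]
  obtain ⟨h1, h1'⟩ := hlow _ (hdA b (-1)) fun x => by linarith [hfb x]
  obtain ⟨h2, h2'⟩ := hlow _ (hdA (-a) 1) fun x => by linarith [hfa x]
  rw [hlin, fibAvg_affine hp hg y] at h1 h1' h2 h2'
  have hab : a ≤ b := (hfa z).trans (hfb z)
  have := mul_le_mul_of_nonneg_right hmass (sub_nonneg.mpr hab)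
  rw [abs_le]
  constructor <;> nlinarith

omit [∀ n, Fintype (A n)] hp hg in
lemma exists_horizon {u : ℕ → ℝ} (hu0 : ∀ j, 0 ≤ u j) (hdiv : ¬ Summable u) (l : ℕ) :
    ∃ J, l ≤ J ∧ 0 < ∑ j ∈ Finset.range (J + 1), u j ∧
      2 * ∑ j ∈ Finset.range (l + 1), u j ≤ ∑ j ∈ Finset.range (J + 1), u j := by
  have h := (not_summable_iff_tendsto_nat_atTop_of_nonneg hu0).mp hdiv
  have h' := h.comp (tendsto_add_atTop_nat 1)
  obtain ⟨J, h1, h2, h3⟩ := ((eventually_ge_atTop l).and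
    ((h'.eventually_gt_atTop 0).and (h'.eventually_ge_atTop
      (2 * ∑ j ∈ Finset.range (l + 1), u j)))).exists
  exact ⟨J, h1, h2, h3⟩

/-- Averaging over a long enough block contracts the oscillation of a function of finitely many
coordinates by the factor `3/4`. The offsets in `[l, J)` carry at least half of the normalized
mass of `u`. They split into those where the renewal density for `z` is at most the one for
`z'` and those where it exceeds it; one of the two classes carries at least a quarter, and
`fibAvg_contract_aux` applies to it. -/
lemma fibAvg_contract (hdep : ∀ k, DependsOn (g k) (Set.Ici k))
    (f₀ : ℕ → ℝ) (hf₀ : ∀ m, 0 ≤ f₀ m)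
    (hvar : ∀ k m x x', (∀ j ∈ Set.Icc k (k + m), x' j = x j) → f₀ m * g k x ≤ g k x')
    (hdiv : ¬ Summable fun j => ∏ m ∈ Finset.range j, f₀ m) (s l : ℕ) :
    ∃ J, l ≤ J ∧ ∀ (f : (∀ k, A k) → ℝ) (d : ℝ), DependsOn f (Set.Ico s (s + l)) →
      (∀ x x', |f x - f x'| ≤ d) → ∀ z z',
      |fibAvg p g y s J f z - fibAvg p g y s J f z'| ≤ 3 / 4 * d := by
  set u : ℕ → ℝ := fun j => ∏ m ∈ Finset.range j, f₀ m with hu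
  have hu0 : ∀ j, 0 ≤ u j := fun j => Finset.prod_nonneg fun m _ => hf₀ m
  obtain ⟨J, hlJ, hpos, hJ⟩ := exists_horizon hu0 hdiv l
  refine ⟨J, hlJ, fun f d hf hosc z z' => ?_⟩
  have hd : 0 ≤ d := (abs_nonneg _).trans (hosc z z)
  set c := (∑ j ∈ Finset.range (J + 1), u j)⁻¹ with hcdef
  have hc : 0 ≤ c := by positivity
  have hcu : c * ∑ j ∈ Finset.range (J + 1), u j = 1 := inv_mul_cancel₀ hpos.ne'
  have hbdd : BddBelow (Set.range f) := ⟨f z - d, by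
    rintro _ ⟨x, rfl⟩; have := (abs_le.mp (hosc z x)).2; linarith⟩
  have : Nonempty (∀ k, A k) := ⟨z⟩
  have hfa : ∀ x, (⨅ w, f w) ≤ f x := fun x => ciInf_le hbdd x
  have hfb : ∀ x, f x ≤ (⨅ w, f w) + d := fun x => by
    have : f x - d ≤ ⨅ w, f w := le_ciInf fun w => by
      have := (abs_le.mp (hosc x w)).2; linarith
    linarith
  set Q : ℕ → (∀ k, A k) → ℝ := fun k w =>
    wordSum p y (s + (k + 1)) (J - (k + 1)) (gProd g s (k + 1) J) w /
      wordSum p y s J (gProd g s 0 J) w with hQ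
  set S₁ := (Finset.Ico l J).filter (fun k => Q k z ≤ Q k z')
  set S₂ := (Finset.Ico l J).filter (fun k => ¬ Q k z ≤ Q k z')
  have h1 := fibAvg_contract_aux hp hg y hdep f₀ hf₀ hvar (S := S₁) (Finset.filter_subset _ _)
    hf hfa hfb z z' (fun k hk => (Finset.mem_filter.mp hk).2) c hc hcu.le
  have h2 := fibAvg_contract_aux hp hg y hdep f₀ hf₀ hvar (S := S₂) (Finset.filter_subset _ _)
    hf hfa hfb z' z (fun k hk => (not_le.mp (Finset.mem_filter.mp hk).2).le) c hc hcu.le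
  rw [abs_sub_comm] at h2
  have hsum : ∑ e ∈ S₁, u (e + 1) + ∑ e ∈ S₂, u (e + 1) = ∑ e ∈ Finset.Ico l J, u (e + 1) :=
    Finset.sum_filter_add_sum_filter_not _ _ _
  have hIco : ∑ e ∈ Finset.Ico l J, u (e + 1) =
      ∑ j ∈ Finset.range (J + 1), u j - ∑ j ∈ Finset.range (l + 1), u j := by
    rw [Finset.sum_Ico_eq_sub _ hlJ, Finset.sum_range_succ' u J, Finset.sum_range_succ' u l]
    ring
  have hge : 1 / 2 ≤ c * ∑ e ∈ S₁, u (e + 1) + c * ∑ e ∈ S₂, u (e + 1) := by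
    rw [← mul_add, hsum, hIco]
    have := mul_le_mul_of_nonneg_left hJ hc
    nlinarith
  simp only [add_sub_cancel_left] at h1 h2
  by_cases h : 1 / 4 ≤ c * ∑ e ∈ S₁, u (e + 1)
  · exact h1.trans (mul_le_mul_of_nonneg_right (by linarith) hd)
  · exact h2.trans (mul_le_mul_of_nonneg_right (by linarith) hd)

omit hp hg in
lemma fibAvg_dependsOn (hdep : ∀ k, DependsOn (g k) (Set.Ici k)) {s : ℕ} (i : ℕ)
    {f : (∀ k, A k) → ℝ} (hf : DependsOn f (Set.Ici s)) :
    DependsOn (fibAvg p g y s i f) (Set.Ici (s + i)) := by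
  have hsub : Set.Ici s ⊆ Set.Ico s (s + i) ∪ Set.Ici (s + i) := fun k hk => by
    simp only [Set.mem_Ici, Set.mem_union, Set.mem_Ico] at hk ⊢; omega
  have hP : DependsOn (gProd g s 0 i) (Set.Ici s) := gProd_dependsOn hdep s 0 i
  have hPf : DependsOn (fun w => gProd g s 0 i w * f w) (Set.Ici s) := fun x x' h => by
    simp only [hP h, hf h]
  intro x x' h
  unfold fibAvg
  rw [wordSum_dependsOn p y hP hsub h, wordSum_dependsOn p y hPf hsub h]

/-- Consistency of the specification: averaging first over a shorter block does not change the
average over a longer one. -/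
lemma fibAvg_tower (hdep : ∀ k, DependsOn (g k) (Set.Ici k)) {s : ℕ} (i j : ℕ) (hij : i ≤ j)
    {f : (∀ k, A k) → ℝ} (hf : DependsOn f (Set.Ici s)) :
    fibAvg p g y s j (fibAvg p g y s i f) = fibAvg p g y s j f := by
  obtain ⟨d, rfl⟩ := Nat.exists_eq_add_of_le hij
  have hP : ∀ x, gProd g s 0 (i + d) x = gProd g s i (i + d) x * gProd g s 0 i x := fun x => by
    unfold gProd
    rw [mul_comm, Finset.prod_Ico_consecutive _ (by omega) (by omega)]
  have hQ := gProd_dependsOn hdep s i (i + d)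
  have hU := fibAvg_dependsOn (p := p) y hdep i hf
  have hQU : DependsOn (fun x => gProd g s i (i + d) x * fibAvg p g y s i f x)
      (Set.Ici (s + i)) := fun x x' h => by simp only [hQ h, hU h]
  have e1 : wordSum p y s (i + d) (fun w => gProd g s 0 (i + d) w * fibAvg p g y s i f w) =
      wordSum p y s (i + d) (fun w => gProd g s 0 (i + d) w * f w) := by
    rw [wordSum_split, wordSum_split]
    congr 1
    have e2 : (fun w => gProd g s 0 (i + d) w * fibAvg p g y s i f w) = fun w =>
        (gProd g s i (i + d) w * fibAvg p g y s i f w) * gProd g s 0 i w := by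
      funext w; rw [hP]; ring
    have e3 : (fun w => gProd g s 0 (i + d) w * f w) = fun w =>
        gProd g s i (i + d) w * (gProd g s 0 i w * f w) := by
      funext w; rw [hP]; ring
    rw [e2, e3, wordSum_pull _ _ _ _ hQU, wordSum_pull _ _ _ _ hQ]
    funext x
    have hZ := wordSum_pos p y hp (s := s) (j := i) (gProd_pos hg s 0 i) x
    rw [mul_assoc]
    congr 1
    unfold fibAvg
    field_simp
  funext x
  rw [fibAvg, e1, ← fibAvg]

/-- Later averages stay within the range of earlier ones. -/
lemma fibAvg_range (hdep : ∀ k, DependsOn (g k) (Set.Ici k)) {s : ℕ} (i j : ℕ) (hij : i ≤ j)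
    {f : (∀ k, A k) → ℝ} (hf : DependsOn f (Set.Ici s)) {d : ℝ}
    (hd : ∀ x x', |fibAvg p g y s i f x - fibAvg p g y s i f x'| ≤ d) (x x') :
    |fibAvg p g y s j f x - fibAvg p g y s i f x'| ≤ d := by
  rw [← fibAvg_tower hp hg y hdep i j hij hf]
  have := fibAvg_close hp hg y (s := s) (J := j) (f := fibAvg p g y s i f)
    (f' := fun _ => fibAvg p g y s i f x') (fun w => hd w x') x
  rwa [fibAvg_const hp hg y] at this

end Averages

/-! ### Convergence of the fibre averages -/

section Limits

variable {A B : ℕ → Type} [∀ n, Fintype (A n)] {p : ∀ n, A n → B n}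
  {g : ℕ → (∀ k, A k) → ℝ}
  [∀ n, TopologicalSpace (A n)] [∀ n, DiscreteTopology (A n)]
  [∀ n, TopologicalSpace (B n)] [∀ n, DiscreteTopology (B n)]

omit [∀ n, DiscreteTopology (A n)] in
lemma continuous_fibSum {f : (∀ k, B k) → (∀ k, A k) → ℝ}
    (hf : Continuous fun q : (∀ k, B k) × (∀ k, A k) => f q.1 q.2) (k : ℕ) :
    Continuous fun q : (∀ k, B k) × (∀ k, A k) => fibSum p q.1 k (f q.1) q.2 := by
  classical
  unfold fibSum
  refine continuous_finsetSum _ fun a _ => ?_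
  have h1 : Continuous fun q : (∀ k, B k) × (∀ k, A k) => f q.1 (Function.update q.2 k a) :=
    hf.comp (continuous_fst.prodMk (continuous_snd.update k continuous_const))
  have h2 : Continuous fun q : (∀ k, B k) × (∀ k, A k) =>
      if p k a = q.1 k then (1 : ℝ) else 0 :=
    (continuous_of_discreteTopology (f := fun b : B k => if p k a = b then (1 : ℝ) else 0)).comp
      ((continuous_apply k).comp continuous_fst)
  refine (h2.mul h1).congr fun q => ?_
  by_cases h : p k a = q.1 k <;> simp [h]

omit [∀ n, DiscreteTopology (A n)] in
lemma continuous_wordSum {f : (∀ k, B k) → (∀ k, A k) → ℝ}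
    (hf : Continuous fun q : (∀ k, B k) × (∀ k, A k) => f q.1 q.2) (s j : ℕ) :
    Continuous fun q : (∀ k, B k) × (∀ k, A k) => wordSum p q.1 s j (f q.1) q.2 := by
  induction j with
  | zero => exact hf
  | succ j ih => exact continuous_fibSum (f := fun y => wordSum p y s j (f y)) ih (s + j)

variable (hp : ∀ n, Function.Surjective (p n)) (hg : ∀ k x, 0 < g k x)
  (hgc : ∀ k, Continuous (g k))
include hp hg hgc

omit [∀ n, DiscreteTopology (A n)] in
lemma continuous_fibAvg {f : (∀ k, B k) → (∀ k, A k) → ℝ}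
    (hf : Continuous fun q : (∀ k, B k) × (∀ k, A k) => f q.1 q.2) (s j : ℕ) :
    Continuous fun q : (∀ k, B k) × (∀ k, A k) => fibAvg p g q.1 s j (f q.1) q.2 := by
  have hP : Continuous (gProd g s 0 j) := continuous_finsetProd _ fun k _ => hgc _
  refine Continuous.div (continuous_wordSum (f := fun y w => gProd g s 0 j w * f y w) ?_ s j)
    (continuous_wordSum (f := fun _ => gProd g s 0 j) ?_ s j) ?_
  · exact (hP.comp continuous_snd).mul hf
  · exact hP.comp continuous_snd
  · exact fun q => (wordSum_pos p q.1 hp (gProd_pos hg s 0 j) q.2).ne'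

omit [∀ n, TopologicalSpace (B n)] [∀ n, DiscreteTopology (B n)] hp hg hgc in
/-- Uniform continuity on the compact product, in terms of coordinates. -/
lemma exists_agree_close {U : (∀ k, A k) → ℝ} (hU : Continuous U) {ε : ℝ} (hε : 0 < ε) :
    ∃ L : ℕ, ∀ x x', (∀ k < L, x k = x' k) → |U x - U x'| ≤ ε := by
  let _ : MetricSpace (∀ k, A k) := PiNat.metricSpace
  have huc : UniformContinuous U := CompactSpace.uniformContinuous_of_continuous hU
  obtain ⟨δ, hδ, h⟩ := Metric.uniformContinuous_iff.mp huc ε hε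
  obtain ⟨L, hL⟩ := exists_pow_lt_of_lt_one hδ (show (1 / 2 : ℝ) < 1 by norm_num)
  refine ⟨L, fun x x' hx => ?_⟩
  have : dist x x' ≤ (1 / 2) ^ L := PiNat.mem_cylinder_iff_dist_le.mp fun k hk => hx k hk
  have := h (this.trans_lt hL)
  rw [Real.dist_eq] at this
  exact this.le

variable (hdep : ∀ k, DependsOn (g k) (Set.Ici k))
    (f₀ : ℕ → ℝ) (hf₀ : ∀ m, 0 ≤ f₀ m)
    (hvar : ∀ k m x x', (∀ j ∈ Set.Icc k (k + m), x' j = x j) → f₀ m * g k x ≤ g k x')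
    (hdiv : ¬ Summable fun j => ∏ m ∈ Finset.range j, f₀ m)
include hdep hf₀ hvar hdiv

omit [∀ n, TopologicalSpace (B n)] [∀ n, DiscreteTopology (B n)] hgc in
/-- A fibre average is uniformly within `d / 16` of a function of finitely many coordinates, to
which `fibAvg_contract` applies; `7/8 = 3/4 + 2/16`. -/
lemma fibAvg_shrink (y : ∀ k, B k) {s : ℕ} {f : (∀ k, A k) → ℝ} (hf : DependsOn f (Set.Ici s))
    (i : ℕ) (hU : Continuous (fibAvg p g y s i f)) {d : ℝ} (hd0 : 0 < d)
    (hd : ∀ x x', |fibAvg p g y s i f x - fibAvg p g y s i f x'| ≤ d) :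
    ∃ j, i ≤ j ∧ ∀ x x', |fibAvg p g y s j f x - fibAvg p g y s j f x'| ≤ 7 / 8 * d := by
  classical
  rcases isEmpty_or_nonempty (∀ k, A k) with hE | ⟨⟨x₀⟩⟩
  · exact ⟨i, le_rfl, fun x => hE.elim x⟩
  set U := fibAvg p g y s i f with hUdef
  have hUdep := fibAvg_dependsOn (p := p) y hdep i hf
  obtain ⟨L, hL⟩ := exists_agree_close hU (show 0 < d / 16 by positivity)
  set l := i + L with hl
  set f' : (∀ k, A k) → ℝ := fun x => U (fun k => if k < s + l then x k else x₀ k) with hf'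
  have hclose : ∀ x, |U x - f' x| ≤ d / 16 := fun x => hL _ _ fun k hk => by
    rw [if_pos (by omega)]
  have hf'dep : DependsOn f' (Set.Ico s (s + l)) := fun x x' h => hUdep fun k hk => by
    simp only [Set.mem_Ici] at hk
    split_ifs with hkl
    · exact h k ⟨by omega, hkl⟩
    · rfl
  obtain ⟨J, hlJ, hJ⟩ := fibAvg_contract hp hg y hdep f₀ hf₀ hvar hdiv s l
  refine ⟨J, by omega, fun x x' => ?_⟩
  rw [← fibAvg_tower hp hg y hdep i J (by omega) hf]
  have h1 := fibAvg_close hp hg y (s := s) (J := J) hclose x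
  have h2 := fibAvg_close hp hg y (s := s) (J := J) hclose x'
  have h3 := hJ f' d hf'dep (fun w w' => hd _ _) x x'
  rw [abs_le] at h1 h2 h3 ⊢
  constructor <;> linarith

lemma fibAvg_osc (y : ∀ k, B k) {s : ℕ} {f : (∀ k, A k) → ℝ} (hf : DependsOn f (Set.Ici s))
    (hfc : Continuous f) (hf0 : ∀ x, 0 ≤ f x) (hf1 : ∀ x, f x ≤ 1) {ε : ℝ} (hε : 0 < ε) :
    ∃ j, ∀ x x', |fibAvg p g y s j f x - fibAvg p g y s j f x'| ≤ ε := by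
  have key : ∀ n : ℕ, ∃ j, ∀ x x',
      |fibAvg p g y s j f x - fibAvg p g y s j f x'| ≤ (7 / 8 : ℝ) ^ n := by
    intro n
    induction n with
    | zero =>
      refine ⟨0, fun x x' => ?_⟩
      have h : ∀ x, fibAvg p g y s 0 f x = f x := fun x => by
        simp [fibAvg, wordSum, gProd]
      rw [h, h, pow_zero, abs_le]
      constructor <;> linarith [hf0 x, hf1 x, hf0 x', hf1 x']
    | succ n ih =>
      obtain ⟨i, hi⟩ := ih
      have hU : Continuous (fibAvg p g y s i f) :=
        (continuous_fibAvg hp hg hgc (f := fun _ => f) (hfc.comp continuous_snd) s i).comp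
          (continuous_const.prodMk continuous_id : Continuous fun x => (y, x))
      obtain ⟨j, -, hj⟩ := fibAvg_shrink hp hg hdep f₀ hf₀ hvar hdiv y hf i hU
        (by positivity) hi
      exact ⟨j, fun x x' => by rw [pow_succ']; exact hj x x'⟩
  obtain ⟨n, hn⟩ := exists_pow_lt_of_lt_one hε (show (7 / 8 : ℝ) < 1 by norm_num)
  obtain ⟨j, hj⟩ := key n
  exact ⟨j, fun x x' => (hj x x').trans hn.le⟩

/-- The fibre averages converge to a limit not depending on the boundary condition. -/
lemma fibAvg_tendsto [∀ n, Nonempty (A n)] (y : ∀ k, B k) {s : ℕ} {f : (∀ k, A k) → ℝ}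
    (hf : DependsOn f (Set.Ici s))
    (hfc : Continuous f) (hf0 : ∀ x, 0 ≤ f x) (hf1 : ∀ x, f x ≤ 1) :
    ∃ q : ℝ, (∀ x, Tendsto (fun j => fibAvg p g y s j f x) atTop (nhds q)) ∧
      ∀ ε > 0, ∃ j, ∀ x, |fibAvg p g y s j f x - q| ≤ ε := by
  obtain ⟨x₀⟩ : Nonempty (∀ k, A k) := inferInstance
  have hosc := fun ε (hε : (0 : ℝ) < ε) =>
    fibAvg_osc hp hg hgc hdep f₀ hf₀ hvar hdiv y hf hfc hf0 hf1 hε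
  have hcauchy : CauchySeq fun j => fibAvg p g y s j f x₀ := by
    rw [Metric.cauchySeq_iff']
    intro ε hε
    obtain ⟨j, hj⟩ := hosc (ε / 2) (by positivity)
    refine ⟨j, fun n hn => ?_⟩
    rw [Real.dist_eq]
    exact (fibAvg_range hp hg y hdep j n hn hf hj x₀ x₀).trans_lt (by linarith)
  obtain ⟨q, hq⟩ := cauchySeq_tendsto_of_complete hcauchy
  have hclose : ∀ ε > 0, ∃ j, ∀ n ≥ j, ∀ x, |fibAvg p g y s n f x - q| ≤ ε := by
    intro ε hε
    obtain ⟨j, hj⟩ := hosc (ε / 2) (by positivity)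
    have h1 : |fibAvg p g y s j f x₀ - q| ≤ ε / 2 := by
      rw [abs_sub_comm]
      refine le_of_tendsto ((hq.sub_const _).abs) ?_
      filter_upwards [eventually_ge_atTop j] with n hn
      exact fibAvg_range hp hg y hdep j n hn hf hj x₀ x₀
    refine ⟨j, fun n hn x => ?_⟩
    have h2 := fibAvg_range hp hg y hdep j n hn hf hj x x₀
    rw [abs_le] at h1 h2 ⊢
    constructor <;> linarith
  refine ⟨q, fun x => ?_, fun ε hε => ?_⟩
  · rw [Metric.tendsto_atTop]
    intro ε hε
    obtain ⟨j, hj⟩ := hclose (ε / 2) (by positivity)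
    exact ⟨j, fun n hn => by rw [Real.dist_eq]; exact (hj n hn x).trans_lt (by linarith)⟩
  · obtain ⟨j, hj⟩ := hclose ε hε
    exact ⟨j, hj j le_rfl⟩

end Limits

/-! ### The limit as a function of the projected sequence -/

section LimitFunction

lemma wordSum_congr_word {A B : ℕ → Type} [∀ n, Fintype (A n)] {p : ∀ n, A n → B n}
    {y y' : ∀ k, B k} {s j : ℕ} (h : ∀ k ∈ Set.Ico s (s + j), y k = y' k)
    (f : (∀ k, A k) → ℝ) : wordSum p y s j f = wordSum p y' s j f := by
  classical
  induction j with
  | zero => rfl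
  | succ j ih =>
    unfold wordSum
    rw [ih fun k hk => h k ⟨hk.1, by have := hk.2; omega⟩]
    funext x
    unfold fibSum
    rw [h (s + j) ⟨by omega, by omega⟩]

lemma fibAvg_congr_word {A B : ℕ → Type} [∀ n, Fintype (A n)] {p : ∀ n, A n → B n}
    {g : ℕ → (∀ k, A k) → ℝ} {y y' : ∀ k, B k} {s j : ℕ}
    (h : ∀ k ∈ Set.Ico s (s + j), y k = y' k)
    (f : (∀ k, A k) → ℝ) : fibAvg p g y s j f = fibAvg p g y' s j f := by
  funext x
  unfold fibAvg
  rw [wordSum_congr_word h, wordSum_congr_word h]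

lemma fibAvg_sum {A B : ℕ → Type} [∀ n, Fintype (A n)] {p : ∀ n, A n → B n}
    {g : ℕ → (∀ k, A k) → ℝ} (y : ∀ k, B k) {s j : ℕ} {ι : Type*} (I : Finset ι)
    (f : ι → (∀ k, A k) → ℝ) (x : ∀ k, A k) :
    fibAvg p g y s j (fun w => ∑ i ∈ I, f i w) x = ∑ i ∈ I, fibAvg p g y s j (f i) x := by
  unfold fibAvg
  simp only [Finset.mul_sum]
  rw [wordSum_sum, Finset.sum_div]

variable {A B : ℕ → Type} [∀ n, Fintype (A n)] {p : ∀ n, A n → B n}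
  {g : ℕ → (∀ k, A k) → ℝ}
  [∀ n, TopologicalSpace (A n)] [∀ n, DiscreteTopology (A n)]
  [∀ n, TopologicalSpace (B n)] [∀ n, DiscreteTopology (B n)]

/-- The limits of the fibre averages form a continuous function of `y`: near `y` the averages up
to a fixed horizon do not change, and they already confine all later averages. -/
lemma exists_continuous_limit [∀ n, Nonempty (A n)]
    (hp : ∀ n, Function.Surjective (p n)) (hg : ∀ k x, 0 < g k x)
    (hgc : ∀ k, Continuous (g k)) (hdep : ∀ k, DependsOn (g k) (Set.Ici k))
    (f₀ : ℕ → ℝ) (hf₀ : ∀ m, 0 ≤ f₀ m)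
    (hvar : ∀ k m x x', (∀ j ∈ Set.Icc k (k + m), x' j = x j) → f₀ m * g k x ≤ g k x')
    (hdiv : ¬ Summable fun j => ∏ m ∈ Finset.range j, f₀ m)
    {s : ℕ} {f : (∀ k, A k) → ℝ} (hf : DependsOn f (Set.Ici s))
    (hfc : Continuous f) (hf0 : ∀ x, 0 ≤ f x) (hf1 : ∀ x, f x ≤ 1) :
    ∃ q : (∀ k, B k) → ℝ, Continuous q ∧
      ∀ y x, Tendsto (fun j => fibAvg p g y s j f x) atTop (nhds (q y)) := by
  have key := fun y => fibAvg_tendsto hp hg hgc hdep f₀ hf₀ hvar hdiv y hf hfc hf0 hf1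
  choose q hq hq' using key
  refine ⟨q, ?_, hq⟩
  rw [continuous_iff_continuousAt]
  intro y
  rw [ContinuousAt, Metric.tendsto_nhds]
  intro ε hε
  obtain ⟨j, hj⟩ := hq' y (ε / 2) (by positivity)
  have hopen : ∀ᶠ y' in nhds y, ∀ k ∈ Finset.Ico s (s + j), y' k = y k := by
    rw [Filter.eventually_all_finset]
    intro k _
    exact (continuous_apply k).continuousAt.eventually
      ((isOpen_discrete {y k}).mem_nhds rfl)
  filter_upwards [hopen] with y' hy'
  obtain ⟨x⟩ : Nonempty (∀ k, A k) := inferInstance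
  rw [Real.dist_eq]
  refine lt_of_le_of_lt ?_ (show ε / 2 < ε by linarith)
  refine le_of_tendsto (((hq y' x).sub_const (q y)).abs) ?_
  filter_upwards [eventually_ge_atTop j] with n hn
  rw [← fibAvg_tower hp hg y' hdep j n hn hf,
    fibAvg_congr_word (y := y') (y' := y) (j := j) (fun k hk => hy' k (Finset.mem_Ico.mpr hk)) f]
  have := fibAvg_close hp hg y' (s := s) (J := n) (f := fibAvg p g y s j f)
    (f' := fun _ => q y) (ε := ε / 2) hj x
  rwa [fibAvg_const hp hg y'] at this

end LimitFunction

/-! ### Tail measurability and resampling under a Gibbs chain -/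

section Gibbs

lemma tailAlgebra_le (A : ℕ → Type) [∀ n, MeasurableSpace (A n)] (m : ℕ) :
    tailAlgebra A m ≤ MeasurableSpace.pi := by
  apply Measurable.comap_le
  exact measurable_pi_lambda _ fun k => measurable_pi_apply _

/-- A measurable function of the coordinates from `m` on is measurable for the tail σ-algebra: it
factors through the map that resets the earlier coordinates to fixed values. -/
lemma measurable_tailAlgebra_of_dependsOn {A : ℕ → Type} [∀ n, MeasurableSpace (A n)] {m : ℕ}
    {f : (∀ n, A n) → ℝ} (hf : Measurable f) (hdep : DependsOn f (Set.Ici m)) :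
    Measurable[tailAlgebra A m] f := by
  rcases isEmpty_or_nonempty (∀ n, A n) with hE | ⟨⟨x₀⟩⟩
  · intro t _
    rw [Set.eq_empty_of_isEmpty (f ⁻¹' t)]
    exact @MeasurableSet.empty _ (tailAlgebra A m)
  classical
  let τ : (∀ n, A n) → ∀ n, A n := fun x j => if m ≤ j then x j else x₀ j
  have hτ : @Measurable _ _ (tailAlgebra A m) MeasurableSpace.pi τ := by
    refine @measurable_pi_lambda _ _ _ (tailAlgebra A m) _ _ fun j => ?_
    by_cases hj : m ≤ j
    · obtain ⟨k, rfl⟩ := Nat.exists_eq_add_of_le hj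
      have h1 : @Measurable _ _ (tailAlgebra A m) MeasurableSpace.pi
          (fun (x : ∀ n, A n) (k : ℕ) => x (m + k)) := comap_measurable _
      have h2 := (measurable_pi_apply (X := fun k => A (m + k)) k).comp h1
      simp only [τ, if_pos hj]
      exact h2
    · simp only [τ, if_neg hj]
      exact @measurable_const _ _ _ (tailAlgebra A m) _
  have : f = f ∘ τ := by
    funext x
    refine hdep fun j hj => ?_
    simp only [Set.mem_Ici] at hj
    simp [τ, hj]
  rw [this]
  exact hf.comp hτ

variable {A B : ℕ → Type} [∀ n, Fintype (A n)]
  [∀ n, MeasurableSpace (A n)] [∀ n, DiscreteMeasurableSpace (A n)]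
  {g : ℕ → (∀ k, A k) → ℝ}

/-- One step of resampling: the coordinate `x k` may be redrawn from `g k` given the tail. -/
lemma integral_resample {μ : Measure (∀ n, A n)} [IsProbabilityMeasure μ] (k : ℕ)
    (hμ : ∀ a : A k, (fun x : ∀ k, A k => g k (Function.update x k a)) =ᵐ[μ]
      μ[Set.indicator {x : ∀ k, A k | x k = a} (fun _ => (1 : ℝ)) | tailAlgebra A (k + 1)])
    {H : (∀ k, A k) → ℝ} (hH : Measurable H) (hdep : DependsOn H (Set.Ici k))
    {C : ℝ} (hC : ∀ x, |H x| ≤ C) :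
    ∫ x, H x ∂μ = ∫ x, ∑ a : A k, g k (Function.update x k a) * H (Function.update x k a) ∂μ := by
  classical
  have hsplit : ∀ x, H x = ∑ a : A k,
      Set.indicator {x : ∀ k, A k | x k = a} (fun _ => (1 : ℝ)) x * H (Function.update x k a) := by
    intro x
    rw [Finset.sum_eq_single (x k)]
    · simp
    · intro a _ ha
      simp [Set.indicator, ha.symm]
    · simp
  have hHa : ∀ a : A k, Measurable[tailAlgebra A (k + 1)]
      fun x : ∀ k, A k => H (Function.update x k a) := by
    intro a
    refine measurable_tailAlgebra_of_dependsOn (hH.comp ?_) ?_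
    · exact measurable_update_left
    · intro x x' h
      refine hdep fun j hj => ?_
      simp only [Set.mem_Ici] at hj h
      by_cases hjk : j = k
      · subst hjk; simp
      · simp [Function.update_of_ne hjk, h j (by omega)]
  have hle := tailAlgebra_le A (k + 1)
  have hind : ∀ a : A k, Integrable
      (Set.indicator {x : ∀ k, A k | x k = a} (fun _ => (1 : ℝ))) μ := fun a =>
    (integrable_const 1).indicator (measurable_pi_apply k (measurableSet_singleton a))
  have hint : ∀ a : A k, Integrable (fun x =>
      Set.indicator {x : ∀ k, A k | x k = a} (fun _ => (1 : ℝ)) x *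
        H (Function.update x k a)) μ := fun a =>
    (hind a).mul_bdd (c := C) ((hHa a).mono hle le_rfl).aestronglyMeasurable
      (Eventually.of_forall fun x => by rw [Real.norm_eq_abs]; exact hC _)
  have hint' : ∀ a : A k, Integrable (fun x =>
      g k (Function.update x k a) * H (Function.update x k a)) μ := fun a =>
    ((integrable_condExp.congr (hμ a).symm)).mul_bdd (c := C)
      ((hHa a).mono hle le_rfl).aestronglyMeasurable
      (Eventually.of_forall fun x => by rw [Real.norm_eq_abs]; exact hC _)
  rw [integral_finsetSum _ fun a _ => hint' a]
  calc ∫ x, H x ∂μ = ∫ x, ∑ a : A k, Set.indicator {x : ∀ k, A k | x k = a}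
        (fun _ => (1 : ℝ)) x * H (Function.update x k a) ∂μ := integral_congr_ae
          (Eventually.of_forall hsplit)
    _ = _ := by
      rw [integral_finsetSum _ fun a _ => hint a]
      refine Finset.sum_congr rfl fun a _ => ?_
      rw [← integral_condExp hle]
      refine integral_congr_ae ?_
      have := condExp_mul_of_stronglyMeasurable_right (μ := μ) (m := tailAlgebra A (k + 1))
        (hHa a).stronglyMeasurable (hint a) (hind a)
      refine this.trans ?_
      filter_upwards [hμ a] with x hx
      simp only [Pi.mul_apply]
      rw [← hx]

end Gibbs

/-! ### Fibre averages as conditional expectations -/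

section Factor

open Classical in
/-- The indicator of the event that the letter of `x` at site `k` projects to `η k`. -/
noncomputable def letterInd {A B : ℕ → Type} (p : ∀ n, A n → B n) (η : ∀ k, B k) (k : ℕ)
    (x : ∀ k, A k) : ℝ :=
  if p k (x k) = η k then 1 else 0

lemma gProd_succ {A : ℕ → Type} (g : ℕ → (∀ k, A k) → ℝ) (s j : ℕ) (x : ∀ k, A k) :
    gProd g s 0 (j + 1) x = gProd g s 0 j x * g (s + j) x := by
  unfold gProd
  rw [Finset.prod_Ico_succ_top (Nat.zero_le j)]

lemma letterInd_dependsOn {A B : ℕ → Type} (p : ∀ n, A n → B n) (η : ∀ k, B k) (k : ℕ) :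
    DependsOn (letterInd p η k) (Set.Ici k) := fun x x' h => by
  unfold letterInd
  rw [h k (Set.mem_Ici.mpr le_rfl)]

lemma continuous_letterInd {A B : ℕ → Type} [∀ n, TopologicalSpace (A n)]
    [∀ n, DiscreteTopology (A n)] (p : ∀ n, A n → B n) (η : ∀ k, B k) (k : ℕ) :
    Continuous (letterInd p η k) := by
  classical
  exact (continuous_of_discreteTopology (f := fun a : A k => if p k a = η k then (1 : ℝ) else 0)).comp
    (continuous_apply k)

/-- An atom of the algebra generated by the projected letters at sites
`s, …, s + i - 1` is the disjoint union of atoms that also prescribe the next letter. -/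
lemma atom_split {A B : ℕ → Type} [∀ n, Fintype (B n)] (p : ∀ n, A n → B n)
    (η : ∀ k, B k) (s i : ℕ) (x : ∀ k, A k) :
    gProd (letterInd p η) s 0 i x =
      ∑ b : B (s + i), gProd (letterInd p (Function.update η (s + i) b)) s 0 (i + 1) x := by
  classical
  have h : ∀ b : B (s + i), gProd (letterInd p (Function.update η (s + i) b)) s 0 (i + 1) x =
      if p (s + i) (x (s + i)) = b then gProd (letterInd p η) s 0 i x else 0 := by
    intro b
    rw [gProd_succ]
    have : gProd (letterInd p (Function.update η (s + i) b)) s 0 i x =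
        gProd (letterInd p η) s 0 i x := by
      unfold gProd letterInd
      refine Finset.prod_congr rfl fun k hk => ?_
      have := (Finset.mem_Ico.mp hk).2
      rw [Function.update_of_ne (by omega)]
    rw [this]
    simp [letterInd]
  simp only [h]
  simp

variable {A B : ℕ → Type} [∀ n, Fintype (A n)] {p : ∀ n, A n → B n}
  [∀ n, TopologicalSpace (A n)] [∀ n, DiscreteTopology (A n)]
  [∀ n, MeasurableSpace (A n)] [∀ n, DiscreteMeasurableSpace (A n)]
  {g : ℕ → (∀ k, A k) → ℝ} {μ : Measure (∀ n, A n)} [IsProbabilityMeasure μ]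

omit [∀ n, DiscreteTopology (A n)] [∀ n, MeasurableSpace (A n)]
  [∀ n, DiscreteMeasurableSpace (A n)] in
lemma exists_abs_bound {f : (∀ k, A k) → ℝ} (hf : Continuous f) : ∃ C, ∀ x, |f x| ≤ C := by
  obtain ⟨C, hC⟩ := isCompact_univ.exists_bound_of_continuousOn hf.continuousOn
  exact ⟨C, fun x => hC x trivial⟩

omit [∀ n, DiscreteTopology (A n)] [∀ n, MeasurableSpace (A n)]
  [∀ n, DiscreteMeasurableSpace (A n)] in
lemma continuous_wordSum_right {f : (∀ k, A k) → ℝ} (hf : Continuous f) (y : ∀ k, B k)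
    (s j : ℕ) : Continuous (wordSum p y s j f) := by
  let _ : ∀ n, TopologicalSpace (B n) := fun _ => ⊥
  have : ∀ n, DiscreteTopology (B n) := fun _ => ⟨rfl⟩
  exact (continuous_wordSum (f := fun _ => f) (hf.comp continuous_snd) s j).comp
    (continuous_const.prodMk continuous_id : Continuous fun x => (y, x))

variable (hgc : ∀ k, Continuous (g k)) (hdep : ∀ k, DependsOn (g k) (Set.Ici k))
  (hμ : ∀ k (a : A k), (fun x : ∀ k, A k => g k (Function.update x k a)) =ᵐ[μ]
      μ[Set.indicator {x : ∀ k, A k | x k = a} (fun _ => (1 : ℝ)) | tailAlgebra A (k + 1)])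
include hgc hdep hμ

/-- Resampling all letters of an atom. -/
lemma integral_atom (η : ∀ k, B k) (s j : ℕ) {F : (∀ k, A k) → ℝ} (hF : Continuous F)
    (hFd : DependsOn F (Set.Ici s)) :
    ∫ x, gProd (letterInd p η) s 0 j x * F x ∂μ =
      ∫ x, wordSum p η s j (fun w => gProd g s 0 j w * F w) x ∂μ := by
  classical
  induction j generalizing F with
  | zero => simp [wordSum, gProd]
  | succ j ih =>
    set W := wordSum p η s j (fun w => gProd g s 0 j w * F w) with hW
    have hP : Continuous (gProd g s 0 j) := continuous_finsetProd _ fun k _ => hgc _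
    have hWc : Continuous W := continuous_wordSum_right (hP.mul hF) η s j
    have hWd : DependsOn W (Set.Ici (s + j)) := by
      refine wordSum_dependsOn p η (K := Set.Ici s) ?_ ?_
      · have hPd : DependsOn (gProd g s 0 j) (Set.Ici s) := gProd_dependsOn hdep s 0 j
        intro x x' h
        simp only [hPd h, hFd h]
      · intro k hk
        simp only [Set.mem_Ici, Set.mem_union, Set.mem_Ico] at hk ⊢
        omega
    have hLd := letterInd_dependsOn p η (s + j)
    have hLc := continuous_letterInd p η (s + j)
    have hLFd : DependsOn (fun x => letterInd p η (s + j) x * F x) (Set.Ici s) := by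
      intro x x' h
      simp only [hFd h, hLd fun k hk => h k (show s ≤ k by simp only [Set.mem_Ici] at hk; omega)]
    have hLW : DependsOn (fun x => letterInd p η (s + j) x * W x) (Set.Ici (s + j)) := by
      intro x x' h
      simp only [hLd h, hWd h]
    obtain ⟨C, hC⟩ := exists_abs_bound (hLc.mul hWc)
    calc ∫ x, gProd (letterInd p η) s 0 (j + 1) x * F x ∂μ
        = ∫ x, gProd (letterInd p η) s 0 j x * (letterInd p η (s + j) x * F x) ∂μ := by
          simp only [gProd_succ, mul_assoc]
      _ = ∫ x, wordSum p η s j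
            (fun w => gProd g s 0 j w * (letterInd p η (s + j) w * F w)) x ∂μ :=
          ih (hLc.mul hF) hLFd
      _ = ∫ x, letterInd p η (s + j) x * W x ∂μ := by
          rw [hW, ← wordSum_pull p η _ _ hLd]
          simp only [mul_left_comm]
      _ = _ := integral_resample (s + j) (hμ (s + j)) (hLc.mul hWc).measurable hLW hC
      _ = _ := by
          congr 1
          funext x
          have : (fun w => gProd g s 0 (j + 1) w * F w) =
              fun w => g (s + j) w * (gProd g s 0 j w * F w) := by
            funext w; rw [gProd_succ]; ring
          rw [this, wordSum, wordSum_pull p η _ _ (hdep (s + j)), ← hW]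
          unfold fibSum
          refine Finset.sum_congr rfl fun a _ => ?_
          by_cases h : p (s + j) a = η (s + j) <;> simp [letterInd, h]

variable [∀ n, TopologicalSpace (B n)] [∀ n, DiscreteTopology (B n)]
  [∀ n, Fintype (B n)] [∀ n, MeasurableSpace (B n)] [∀ n, DiscreteMeasurableSpace (B n)]

omit hgc hdep hμ in
omit [∀ n, Fintype (A n)] [∀ n, Fintype (B n)] [∀ n, MeasurableSpace (A n)]
  [∀ n, DiscreteMeasurableSpace (A n)] [∀ n, MeasurableSpace (B n)]
  [∀ n, DiscreteMeasurableSpace (B n)] [∀ n, DiscreteTopology (B n)] in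
lemma continuous_symbolic : Continuous fun (x : ∀ n, A n) (n : ℕ) => p n (x n) :=
  continuous_pi fun n => continuous_of_discreteTopology.comp (continuous_apply n)

omit hgc hdep hμ in
omit [∀ n, Fintype (A n)] [∀ n, Fintype (B n)] [∀ n, TopologicalSpace (A n)]
  [∀ n, DiscreteTopology (A n)] [∀ n, TopologicalSpace (B n)]
  [∀ n, DiscreteMeasurableSpace (B n)] [∀ n, DiscreteTopology (B n)] in
lemma measurable_symbolic : Measurable fun (x : ∀ n, A n) (n : ℕ) => p n (x n) :=
  measurable_pi_lambda _ fun n => (Measurable.of_discrete).comp (measurable_pi_apply n)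

omit [∀ n, DiscreteMeasurableSpace (B n)] in
/-- The fibre average over `s, …, s + j - 1` has the same integral as `F` against functions of the
projected letters at these sites. -/
lemma integral_mul_fibAvg (hp : ∀ n, Function.Surjective (p n)) (hg : ∀ k x, 0 < g k x)
    {s : ℕ} {F : (∀ k, A k) → ℝ} (hF : Continuous F) (hFd : DependsOn F (Set.Ici s)) (j : ℕ)
    {h : (∀ k, B k) → ℝ} (hh : Measurable h) {C : ℝ} (hC : ∀ y, |h y| ≤ C)
    (hhd : DependsOn h (Set.Ico s (s + j))) (hne : Nonempty (∀ k, B k)) :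
    ∫ x, h (fun k => p k (x k)) * (F x - fibAvg p g (fun k => p k (x k)) s j F x) ∂μ = 0 := by
  classical
  set D : (∀ k, A k) → ℝ := fun x => F x - fibAvg p g (fun k => p k (x k)) s j F x with hD
  have hDc : Continuous D := by
    refine hF.sub ?_
    exact (continuous_fibAvg hp hg hgc (f := fun _ => F) (hF.comp continuous_snd) s j).comp
      (continuous_symbolic.prodMk continuous_id)
  have hint : ∀ η i, Integrable (fun x => gProd (letterInd p η) s 0 i x *
      (h (fun k => p k (x k)) * D x)) μ := by
    intro η i
    have hPc : Continuous (gProd (letterInd p η) s 0 i) :=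
      continuous_finsetProd _ fun k _ => continuous_letterInd p η _
    obtain ⟨C', hC'⟩ := exists_abs_bound (hPc.mul hDc)
    have h1 : Integrable (fun x => gProd (letterInd p η) s 0 i x * D x) μ :=
      Integrable.of_bound (hPc.mul hDc).measurable.aestronglyMeasurable C'
        (Eventually.of_forall hC')
    refine (h1.bdd_mul (c := C) (hh.comp (measurable_symbolic (p := p))).aestronglyMeasurable
      (Eventually.of_forall fun x => hC _)).congr (Eventually.of_forall fun x => ?_)
    simp only [Function.comp]
    ring
  -- Descending induction on the number `i` of prescribed letters: once all `j` letters are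
  -- prescribed, `h` and the fibre average no longer depend on the projected word.
  have key : ∀ d i, i + d = j → ∀ η : ∀ k, B k,
      ∫ x, gProd (letterInd p η) s 0 i x * (h (fun k => p k (x k)) * D x) ∂μ = 0 := by
    intro d
    induction d with
    | zero =>
      intro i hij η
      obtain rfl : i = j := hij
      have hPc : Continuous (gProd (letterInd p η) s 0 i) :=
        continuous_finsetProd _ fun k _ => continuous_letterInd p η _
      have hAc : Continuous (fibAvg p g η s i F) :=
        (continuous_fibAvg hp hg hgc (f := fun _ => F) (hF.comp continuous_snd) s i).comp
          (continuous_const.prodMk continuous_id : Continuous fun x => (η, x))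
      have hAd : DependsOn (fibAvg p g η s i F) (Set.Ici (s + i)) :=
        fibAvg_dependsOn η hdep i hFd
      have hAd' : DependsOn (fibAvg p g η s i F) (Set.Ici s) := fun x x' hx =>
        hAd fun k hk => hx k (by simp only [Set.mem_Ici] at hk ⊢; omega)
      have e : ∀ x, gProd (letterInd p η) s 0 i x * (h (fun k => p k (x k)) * D x) =
          h η * (gProd (letterInd p η) s 0 i x * F x -
            gProd (letterInd p η) s 0 i x * fibAvg p g η s i F x) := by
        intro x
        by_cases hx : ∀ k ∈ Set.Ico s (s + i), p k (x k) = η k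
        · simp only [hD]
          rw [hhd (y := η) (x := fun k => p k (x k)) hx,
            fibAvg_congr_word (y := fun k => p k (x k)) (y' := η) hx]
          ring
        · push Not at hx
          obtain ⟨k, hk, hne⟩ := hx
          have : gProd (letterInd p η) s 0 i x = 0 := by
            unfold gProd
            refine Finset.prod_eq_zero (i := k - s) ?_ ?_
            · have := hk.1; have := hk.2
              simp only [Finset.mem_Ico]; omega
            · rw [Nat.add_sub_cancel' hk.1]
              simp [letterInd, hne]
          simp [this]
      have int1 : ∀ {V : (∀ k, A k) → ℝ}, Continuous V → Integrable V μ := fun hV => by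
        obtain ⟨C', hC'⟩ := exists_abs_bound hV
        exact Integrable.of_bound hV.measurable.aestronglyMeasurable C' (Eventually.of_forall hC')
      simp only [e]
      rw [integral_const_mul, integral_sub (int1 (hPc.fun_mul hF)) (int1 (hPc.fun_mul hAc)),
        integral_atom hgc hdep hμ η s i hF hFd, integral_atom hgc hdep hμ η s i hAc hAd']
      have : wordSum p η s i (fun w => gProd g s 0 i w * fibAvg p g η s i F w) =
          wordSum p η s i (fun w => gProd g s 0 i w * F w) := by
        simp only [mul_comm (gProd g s 0 i _) (fibAvg p g η s i F _)]
        rw [wordSum_pull p η _ _ hAd]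
        funext x
        unfold fibAvg
        exact div_mul_cancel₀ _ (wordSum_pos p η hp (gProd_pos hg s 0 i) x).ne'
      rw [this, sub_self, mul_zero]
    | succ d ih =>
      intro i hi η
      simp only [atom_split p η s i, Finset.sum_mul]
      rw [integral_finsetSum _ fun b _ => hint _ _]
      exact Finset.sum_eq_zero fun b _ => ih (i + 1) (by omega) _
  obtain ⟨η⟩ := hne
  simpa [gProd] using key j 0 (by omega) η

end Factor

/-! ### Passage to the limit in the conditional expectations -/

section Disintegration

variable {A B : ℕ → Type} [∀ n, Fintype (A n)] {p : ∀ n, A n → B n}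
  [∀ n, TopologicalSpace (A n)] [∀ n, DiscreteTopology (A n)]
  [∀ n, MeasurableSpace (A n)] [∀ n, DiscreteMeasurableSpace (A n)]
  [∀ n, TopologicalSpace (B n)] [∀ n, DiscreteTopology (B n)]
  [∀ n, Fintype (B n)] [∀ n, MeasurableSpace (B n)] [∀ n, DiscreteMeasurableSpace (B n)]
  {g : ℕ → (∀ k, A k) → ℝ} {μ : Measure (∀ n, A n)} [IsProbabilityMeasure μ]

omit [∀ n, TopologicalSpace (B n)] [∀ n, DiscreteTopology (B n)] [∀ n, Fintype (B n)]
  [∀ n, DiscreteMeasurableSpace (B n)] in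
/-- Sets determined by finitely many coordinates from `s` on form a π-system generating the tail
σ-algebra. -/
lemma tailAlgebra_induction {s : ℕ} {P : Set (∀ k, B k) → Prop}
    (hbasic : ∀ t N, MeasurableSet t → DependsOn (· ∈ t) (Set.Ico s (s + N)) → P t)
    (hcompl : ∀ t, MeasurableSet t → P t → P tᶜ)
    (hUnion : ∀ t : ℕ → Set (∀ k, B k), Pairwise (Function.onFun Disjoint t) →
      (∀ i, MeasurableSet (t i)) → (∀ i, P (t i)) → P (⋃ i, t i))
    {t : Set (∀ k, B k)} (ht : MeasurableSet[tailAlgebra B s] t) : P t := by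
  set C : Set (Set (∀ k, B k)) :=
    {t | MeasurableSet t ∧ ∃ N, DependsOn (· ∈ t) (Set.Ico s (s + N))} with hC
  have hpi : MeasurableSpace.generateFrom C ≤ MeasurableSpace.pi :=
    MeasurableSpace.generateFrom_le fun t ht => ht.1
  have hle : tailAlgebra B s ≤ MeasurableSpace.generateFrom C := by
    apply Measurable.comap_le
    refine @measurable_pi_lambda _ _ _ (MeasurableSpace.generateFrom C) _ _ fun k => ?_
    intro u hu
    refine MeasurableSpace.measurableSet_generateFrom ⟨measurable_pi_apply (s + k) hu, k + 1, ?_⟩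
    intro y y' h
    simp only [Set.mem_preimage]
    rw [h (s + k) ⟨by omega, by omega⟩]
  refine MeasurableSpace.induction_on_inter (m := MeasurableSpace.generateFrom C)
    (C := fun t _ => P t) rfl ?_ ?_ ?_ ?_ ?_ t (hle t ht)
  · rintro t ⟨ht, N, hN⟩ t' ⟨ht', N', hN'⟩ -
    refine ⟨ht.inter ht', max N N', fun y y' h => ?_⟩
    have h1 := hN fun k hk => h k ⟨hk.1, hk.2.trans_le (by omega)⟩
    have h2 := hN' fun k hk => h k ⟨hk.1, hk.2.trans_le (by omega)⟩
    simp only [Set.mem_inter_iff]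
    simp only at h1 h2
    rw [h1, h2]
  · exact hbasic ∅ 0 MeasurableSet.empty fun _ _ _ => rfl
  · rintro t ⟨ht, N, hN⟩
    exact hbasic t N ht hN
  · exact fun t ht => hcompl t (hpi t ht)
  · exact fun t hd ht => hUnion t hd fun i => hpi _ (ht i)

omit [∀ n, DiscreteMeasurableSpace (B n)] in
/-- If the fibre averages of `F` converge to `q`, then `q ∘ π̂` is the conditional expectation
of `F` given the projected letters from `s` on. -/
lemma setIntegral_limit (hgc : ∀ k, Continuous (g k)) (hdep : ∀ k, DependsOn (g k) (Set.Ici k))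
    (hμ : ∀ k (a : A k), (fun x : ∀ k, A k => g k (Function.update x k a)) =ᵐ[μ]
      μ[Set.indicator {x : ∀ k, A k | x k = a} (fun _ => (1 : ℝ)) | tailAlgebra A (k + 1)])
    (hp : ∀ n, Function.Surjective (p n)) (hg : ∀ k x, 0 < g k x)
    {s : ℕ} {F : (∀ k, A k) → ℝ} (hF : Continuous F) (hFd : DependsOn F (Set.Ici s))
    (hF0 : ∀ x, 0 ≤ F x) (hF1 : ∀ x, F x ≤ 1) (hne : Nonempty (∀ k, B k))
    {q : (∀ k, B k) → ℝ} (hqc : Continuous q)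
    (hq : ∀ y x, Tendsto (fun j => fibAvg p g y s j F x) atTop (nhds (q y)))
    {t : Set (∀ k, B k)} (ht : MeasurableSet[tailAlgebra B s] t) :
    ∫ x in (fun (x : ∀ n, A n) (n : ℕ) => p n (x n)) ⁻¹' t,
      (F x - q (fun n => p n (x n))) ∂μ = 0 := by
  classical
  have hπ : Measurable fun (x : ∀ n, A n) (n : ℕ) => p n (x n) := measurable_symbolic
  have hDc : Continuous fun x => F x - q (fun n => p n (x n)) :=
    hF.sub (hqc.comp continuous_symbolic)
  have hDi : Integrable (fun x => F x - q (fun n => p n (x n))) μ := by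
    obtain ⟨C, hC⟩ := exists_abs_bound hDc
    exact Integrable.of_bound hDc.measurable.aestronglyMeasurable C (Eventually.of_forall hC)
  have hbasic : ∀ (t : Set (∀ k, B k)) (N : ℕ), MeasurableSet t →
      DependsOn (· ∈ t) (Set.Ico s (s + N)) →
      ∫ x in (fun (x : ∀ n, A n) (n : ℕ) => p n (x n)) ⁻¹' t,
        (F x - q (fun n => p n (x n))) ∂μ = 0 := by
    intro t N ht hN
    set h : (∀ k, B k) → ℝ := t.indicator fun _ => 1 with hh
    have hhm : Measurable h := measurable_const.indicator ht
    have hh1 : ∀ y, |h y| ≤ 1 := fun y => by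
      by_cases hy : y ∈ t <;> simp [hh, hy]
    have hhd : ∀ j ≥ N, DependsOn h (Set.Ico s (s + j)) := fun j hj y y' hy => by
      have h1 := hN (fun k hk => hy k ⟨hk.1, hk.2.trans_le (by omega)⟩)
      simp only at h1
      simp only [hh, Set.indicator]
      by_cases hyt : y ∈ t
      · rw [if_pos hyt, if_pos (h1 ▸ hyt)]
      · rw [if_neg hyt, if_neg (h1 ▸ hyt)]
    have e : ∫ x in (fun (x : ∀ n, A n) (n : ℕ) => p n (x n)) ⁻¹' t,
        (F x - q (fun n => p n (x n))) ∂μ =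
        ∫ x, h (fun k => p k (x k)) * (F x - q (fun n => p n (x n))) ∂μ := by
      rw [← integral_indicator (hπ ht)]
      congr 1
      funext x
      by_cases hx : (fun k => p k (x k)) ∈ t <;> simp [hh, Set.indicator, hx]
    rw [e]
    have hlim : Tendsto (fun j => ∫ x, h (fun k => p k (x k)) *
        (F x - fibAvg p g (fun k => p k (x k)) s j F x) ∂μ) atTop
        (nhds (∫ x, h (fun k => p k (x k)) * (F x - q (fun n => p n (x n))) ∂μ)) := by
      refine tendsto_integral_of_dominated_convergence (fun _ => 1) ?_ (integrable_const 1) ?_ ?_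
      · intro j
        have hc : Continuous fun x => F x - fibAvg p g (fun k => p k (x k)) s j F x :=
          hF.sub ((continuous_fibAvg hp hg hgc (f := fun _ => F)
            (hF.comp continuous_snd) s j).comp (continuous_symbolic.prodMk continuous_id))
        exact ((hhm.comp hπ).mul hc.measurable).aestronglyMeasurable
      · refine fun j => Eventually.of_forall fun x => ?_
        rw [Real.norm_eq_abs, abs_mul]
        have h1 := fibAvg_mono hp hg (fun k => p k (x k)) (s := s) (J := j) hF0 x
        have h2 := fibAvg_mono hp hg (fun k => p k (x k)) (s := s) (J := j) hF1 x
        rw [fibAvg_const hp hg] at h1 h2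
        refine mul_le_one₀ (hh1 _) (abs_nonneg _) ?_
        rw [abs_le]
        constructor <;> linarith [hF0 x, hF1 x]
      · refine Eventually.of_forall fun x => ?_
        exact ((hq _ x).const_sub _).const_mul _
    refine tendsto_nhds_unique hlim (tendsto_const_nhds.congr' ?_)
    filter_upwards [eventually_ge_atTop N] with j hj
    exact (integral_mul_fibAvg hgc hdep hμ hp hg hF hFd j hhm hh1 (hhd j hj) hne).symm
  refine tailAlgebra_induction (P := fun t =>
    ∫ x in (fun (x : ∀ n, A n) (n : ℕ) => p n (x n)) ⁻¹' t,
      (F x - q (fun n => p n (x n))) ∂μ = 0) hbasic ?_ ?_ ht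
  · intro t ht h0
    have hu := hbasic Set.univ 0 MeasurableSet.univ fun _ _ _ => rfl
    rw [Set.preimage_univ, setIntegral_univ] at hu
    rw [Set.preimage_compl, setIntegral_compl (hπ ht) hDi, h0, hu, sub_zero]
  · intro t hd ht h0
    rw [Set.preimage_iUnion, integral_iUnion (fun i => hπ (ht i)) ?_ hDi.integrableOn]
    · simp [h0]
    · exact fun i j hij => (hd hij).preimage _

open Classical in
/-- The conditional probability, given the tail after site `n`, that the letter at `n`
projects to `b`. -/
noncomputable def blockProb (p : ∀ n, A n → B n) (g : ℕ → (∀ k, A k) → ℝ) (n : ℕ) (b : B n)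
    (x : ∀ k, A k) : ℝ :=
  ∑ a : A n, if p n a = b then g n (Function.update x n a) else 0

omit [∀ n, TopologicalSpace (A n)] [∀ n, DiscreteTopology (A n)]
  [∀ n, TopologicalSpace (B n)] [∀ n, DiscreteTopology (B n)] [∀ n, Fintype (B n)]
  [∀ n, DiscreteMeasurableSpace (B n)] in
/-- `blockProb` is the conditional probability of the event `p n (x n) = b` given the letters after
`n`, hence has the right integrals over events of the projected tail. -/
lemma setIntegral_blockProb (n : ℕ)
    (hμ : ∀ (a : A n), (fun x : ∀ k, A k => g n (Function.update x n a)) =ᵐ[μ]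
      μ[Set.indicator {x : ∀ k, A k | x n = a} (fun _ => (1 : ℝ)) | tailAlgebra A (n + 1)])
    (b : B n) {t : Set (∀ k, B k)} (ht : MeasurableSet[tailAlgebra B (n + 1)] t) :
    ∫ x in (fun (x : ∀ n, A n) (n : ℕ) => p n (x n)) ⁻¹' t,
        Set.indicator {x : ∀ k, A k | p n (x n) = b} (fun _ => (1 : ℝ)) x ∂μ =
      ∫ x in (fun (x : ∀ n, A n) (n : ℕ) => p n (x n)) ⁻¹' t, blockProb p g n b x ∂μ := by
  classical
  have hπ : Measurable fun (x : ∀ n, A n) (n : ℕ) => p n (x n) := measurable_symbolic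
  have htm : MeasurableSet t := tailAlgebra_le B (n + 1) t ht
  have htail : ∀ y y' : ∀ k, B k, (∀ k, n + 1 ≤ k → y k = y' k) → (y ∈ t ↔ y' ∈ t) := by
    obtain ⟨u, -, rfl⟩ := ht
    intro y y' h
    simp only [Set.mem_preimage]
    have : (fun k => y (n + 1 + k)) = fun k => y' (n + 1 + k) :=
      funext fun k => h _ (by omega)
    rw [this]
  rw [← integral_indicator (hπ htm), ← integral_indicator (hπ htm)]
  have hbm : MeasurableSet {x : ∀ k, A k | p n (x n) = b} :=
    measurable_pi_apply n (MeasurableSet.of_discrete (s := {a | p n a = b}))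
  rw [integral_resample n hμ (C := 1)]
  · congr 1
    funext x
    have hx : ∀ a : A n, ((fun k => p k (Function.update x n a k)) ∈ t ↔
        (fun k => p k (x k)) ∈ t) := fun a => htail _ _ fun k hk => by
      rw [Function.update_of_ne (by omega)]
    by_cases hxt : (fun k => p k (x k)) ∈ t
    · simp only [Set.indicator, Set.mem_preimage, hx, hxt, if_true, blockProb]
      simp
    · simp [Set.indicator, Set.mem_preimage, hx, hxt]
  · exact (measurable_const.indicator hbm).indicator (hπ htm)
  · intro x x' h
    have h1 := htail (fun k => p k (x k)) (fun k => p k (x' k)) fun k hk => by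
      rw [h k (by simp only [Set.mem_Ici]; omega)]
    simp only [Set.indicator, Set.mem_preimage, Set.mem_ofPred_eq, h1,
      h n (Set.mem_Ici.mpr le_rfl)]
  · intro x
    simp only [Set.indicator]
    split_ifs <;> simp

end Disintegration

/-! ### The factor of a Gibbs chain -/

/-- **Theorem 2 (ii).**  Let `(φ_n)` be a normalized continuous potential sequence on
`X = ∏ A_n` whose uniform variations `r_k` satisfy Berbee's condition, let `μ` be a Gibbs
chain for `(φ_n)` and let `π̂ : X → Y = ∏ B_n` be a symbolic map.  Then there is a
normalized continuous potential sequence `(ψ_n)` on `Y` such that the pushforward measure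
`μ∘π̂⁻¹` is a Gibbs chain for `(ψ_n)`. -/
theorem factor_gibbs_chain_of_berbee
    (A : ℕ → Type) (B : ℕ → Type)
    [∀ n, Fintype (A n)] [∀ n, Nontrivial (A n)]
    [∀ n, TopologicalSpace (A n)] [∀ n, DiscreteTopology (A n)]
    [∀ n, MeasurableSpace (A n)] [∀ n, DiscreteMeasurableSpace (A n)]
    [∀ n, Fintype (B n)]
    [∀ n, TopologicalSpace (B n)] [∀ n, DiscreteTopology (B n)]
    [∀ n, MeasurableSpace (B n)] [∀ n, DiscreteMeasurableSpace (B n)]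
    (φ : ℕ → (∀ k, A k) → ℝ) (hφ : IsNormalizedPotential A φ)
    -- `r k` is the uniform variation `r_k = sup_n var_k φ_n` …
    (r : ℕ → ℝ)
    (hr : ∀ k, 1 ≤ k → ∀ n (x y : ∀ j, A j),
      (∀ i, n ≤ i → i < n + k → x i = y i) → |φ n x - φ n y| ≤ r k)
    -- … and it satisfies Berbee's condition `∑ exp(-(r_1 + ⋯ + r_m)) = ∞`:
    (hBerbee : ¬ Summable fun m : ℕ => Real.exp (-(∑ i ∈ Finset.Icc 1 m, r i)))
    (μ : Measure (∀ n, A n)) (hμ : IsGibbsChain A φ μ)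
    (p : ∀ n, A n → B n) (hp : ∀ n, Function.Surjective (p n)) :
    ∃ ψ : ℕ → (∀ k, B k) → ℝ,
      IsNormalizedPotential B ψ ∧
      IsGibbsChain B ψ (μ.map fun (x : ∀ n, A n) (n : ℕ) => p n (x n)) := by
  classical
  obtain ⟨hφc, hφd, hφ1⟩ := hφ
  obtain ⟨hprob, hμ⟩ := hμ
  set g : ℕ → (∀ k, A k) → ℝ := fun k x => Real.exp (φ k x) with hgdef
  have hg : ∀ k x, 0 < g k x := fun k x => Real.exp_pos _
  have hgc : ∀ k, Continuous (g k) := fun k => Real.continuous_exp.comp (hφc k)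
  have hdep : ∀ k, DependsOn (g k) (Set.Ici k) := fun k x x' h => by
    simp only [hgdef]
    rw [hφd k _ _ h]
  -- The index shift makes `f₀ m` correspond to `m + 1` fixed coordinates, so that the partial
  -- products of `f₀` are the terms of Berbee's series.
  set f₀ : ℕ → ℝ := fun m => Real.exp (-r (m + 1)) with hf₀def
  have hf₀ : ∀ m, 0 ≤ f₀ m := fun m => (Real.exp_pos _).le
  have hvar : ∀ k m x x', (∀ j ∈ Set.Icc k (k + m), x' j = x j) → f₀ m * g k x ≤ g k x' := by
    intro k m x x' h
    simp only [hf₀def, hgdef]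
    rw [← Real.exp_add, Real.exp_le_exp]
    have := (abs_le.mp (hr (m + 1) (by omega) k x' x
      fun i hi hi' => h i ⟨hi, by omega⟩)).1
    linarith
  have hdiv : ¬ Summable fun j => ∏ m ∈ Finset.range j, f₀ m := by
    have : (fun j => ∏ m ∈ Finset.range j, f₀ m) =
        fun m : ℕ => Real.exp (-(∑ i ∈ Finset.Icc 1 m, r i)) := by
      funext j
      rw [← Real.exp_sum, Finset.sum_neg_distrib, Finset.range_eq_Ico,
        Finset.sum_Ico_add' r 0 j 1, zero_add]
      rfl
    rwa [this]
  have hneB : Nonempty (∀ k, B k) := ⟨fun k => p k (Classical.arbitrary (A k))⟩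
  obtain ⟨x₀⟩ : Nonempty (∀ k, A k) := inferInstance
  have hFd : ∀ n (b : B n), DependsOn (blockProb p g n b) (Set.Ici (n + 1)) := by
    intro n b x x' h
    unfold blockProb
    refine Finset.sum_congr rfl fun a _ => ?_
    have : g n (Function.update x n a) = g n (Function.update x' n a) := by
      refine hdep n fun k hk => ?_
      by_cases hkn : k = n
      · subst hkn; simp
      · simp only [Set.mem_Ici] at hk h
        rw [Function.update_of_ne hkn, Function.update_of_ne hkn, h k (by omega)]
    rw [this]
  have hFc : ∀ n (b : B n), Continuous (blockProb p g n b) := by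
    intro n b
    unfold blockProb
    refine continuous_finsetSum _ fun a _ => ?_
    split_ifs
    · exact (hgc n).comp (continuous_id.update n continuous_const)
    · exact continuous_const
  have hF0 : ∀ n (b : B n) x, 0 ≤ blockProb p g n b x := fun n b x =>
    Finset.sum_nonneg fun a _ => by split_ifs; exacts [(hg _ _).le, le_rfl]
  have hFsum : ∀ n x, ∑ b : B n, blockProb p g n b x = 1 := by
    intro n x
    unfold blockProb
    rw [Finset.sum_comm]
    simpa using hφ1 n x
  have hF1 : ∀ n (b : B n) x, blockProb p g n b x ≤ 1 := fun n b x => by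
    rw [← hFsum n x]
    exact Finset.single_le_sum (f := fun b => blockProb p g n b x)
      (fun b _ => hF0 n b x) (Finset.mem_univ b)
  have hFpos : ∀ n (b : B n), ∃ c > 0, ∀ x, c ≤ blockProb p g n b x := by
    intro n b
    obtain ⟨x₁, -, hx₁⟩ := isCompact_univ.exists_isMinOn ⟨x₀, trivial⟩ (hgc n).continuousOn
    refine ⟨g n x₁, hg n x₁, fun x => ?_⟩
    obtain ⟨a, ha⟩ := hp n b
    have h1 : g n x₁ ≤ g n (Function.update x n a) := hx₁ trivial
    refine h1.trans ?_
    have := Finset.single_le_sum (s := Finset.univ)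
      (f := fun a => if p n a = b then g n (Function.update x n a) else 0)
      (fun a _ => by split_ifs; exacts [(hg _ _).le, le_rfl]) (Finset.mem_univ a)
    simp only [ha, if_true] at this
    simpa only [blockProb] using this
  have key := fun n (b : B n) => exists_continuous_limit hp hg hgc hdep f₀ hf₀ hvar hdiv
    (hFd n b) (hFc n b) (hF0 n b) (hF1 n b)
  choose q hqc hq using key
  have hqdep : ∀ n (b : B n) (y y' : ∀ k, B k), (∀ k, n + 1 ≤ k → y k = y' k) →
      q n b y = q n b y' := by
    intro n b y y' h
    refine tendsto_nhds_unique (hq n b y x₀) ((hq n b y' x₀).congr fun j => ?_)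
    rw [fibAvg_congr_word (y := y') (y' := y) fun k hk => (h k hk.1).symm]
  have hqpos : ∀ n (b : B n) y, 0 < q n b y := by
    intro n b y
    obtain ⟨c, hc, hcF⟩ := hFpos n b
    refine hc.trans_le (ge_of_tendsto' (hq n b y x₀) fun j => ?_)
    have := fibAvg_mono hp hg y (s := n + 1) (J := j) hcF x₀
    rwa [fibAvg_const hp hg] at this
  have hqsum : ∀ n y, ∑ b : B n, q n b y = 1 := by
    intro n y
    refine tendsto_nhds_unique (tendsto_finsetSum _ fun b _ => hq n b y x₀)
      (tendsto_const_nhds.congr fun j => ?_)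
    rw [← fibAvg_sum]
    simp only [hFsum]
    rw [fibAvg_const hp hg]
  have hupd : ∀ n (b : B n) (y : ∀ k, B k),
      q n (Function.update y n b n) (Function.update y n b) = q n b y := by
    intro n b y
    rw [Function.update_self]
    exact hqdep n b _ _ fun k hk => Function.update_of_ne (by omega) _ _
  have hexp : ∀ n (b : B n) (y : ∀ k, B k),
      Real.exp (Real.log (q n (Function.update y n b n) (Function.update y n b))) = q n b y := by
    intro n b y
    rw [hupd, Real.exp_log (hqpos n b y)]
  -- The potential of the factor is the logarithm of the limiting conditional probability.
  refine ⟨fun n y => Real.log (q n (y n) y), ⟨fun n => ?_, fun n y y' h => ?_, fun n y => ?_⟩,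
    Measure.isProbabilityMeasure_map measurable_symbolic.aemeasurable, fun n b => ?_⟩
  · refine Continuous.log ?_ fun y => (hqpos n _ y).ne'
    have : (fun y : ∀ k, B k => q n (y n) y) =
        fun y => ∑ b : B n, (if y n = b then (1 : ℝ) else 0) * q n b y := by
      funext y; simp
    rw [this]
    refine continuous_finsetSum _ fun b _ => Continuous.mul ?_ (hqc n b)
    exact (continuous_of_discreteTopology
      (f := fun c : B n => if c = b then (1 : ℝ) else 0)).comp (continuous_apply n)
  · simp only
    rw [h n le_rfl, hqdep n _ y y' fun k hk => h k (by omega)]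
  · simp only [hexp, hqsum]
  · simp only [hexp]
    have hπ : Measurable fun (x : ∀ n, A n) (n : ℕ) => p n (x n) := measurable_symbolic
    have : IsProbabilityMeasure (μ.map fun (x : ∀ n, A n) (n : ℕ) => p n (x n)) :=
      Measure.isProbabilityMeasure_map hπ.aemeasurable
    have hbm : MeasurableSet {y : ∀ k, B k | y n = b} :=
      measurable_pi_apply n (measurableSet_singleton b)
    have hqi : Integrable (q n b) (μ.map fun (x : ∀ n, A n) (n : ℕ) => p n (x n)) := by
      obtain ⟨C, hC⟩ := exists_abs_bound (hqc n b)
      exact Integrable.of_bound (hqc n b).measurable.aestronglyMeasurable C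
        (Eventually.of_forall hC)
    refine ae_eq_condExp_of_forall_setIntegral_eq (tailAlgebra_le B (n + 1))
      ((integrable_const 1).indicator hbm) (fun t _ _ => hqi.integrableOn) ?_ ?_
    · intro t ht _
      have htm := tailAlgebra_le B (n + 1) t ht
      have int1 : ∀ {V : (∀ k, A k) → ℝ}, Continuous V → Integrable V μ := fun hV => by
        obtain ⟨C', hC'⟩ := exists_abs_bound hV
        exact Integrable.of_bound hV.measurable.aestronglyMeasurable C' (Eventually.of_forall hC')
      rw [setIntegral_map htm (hqc n b).measurable.aestronglyMeasurable hπ.aemeasurable,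
        setIntegral_map htm (measurable_const.indicator hbm).aestronglyMeasurable
          hπ.aemeasurable]
      have hqπ : Integrable (fun x : ∀ k, A k => q n b fun k => p k (x k)) μ :=
        int1 ((hqc n b).comp continuous_symbolic)
      have h1 := setIntegral_limit hgc hdep hμ hp hg (hFc n b) (hFd n b) (hF0 n b) (hF1 n b)
        hneB (hqc n b) (hq n b) ht
      rw [integral_sub (int1 (hFc n b)).integrableOn
        hqπ.integrableOn] at h1
      have h2 := setIntegral_blockProb (p := p) (g := g) n (hμ n) b ht
      have h3 : ∀ x : ∀ k, A k, Set.indicator {y : ∀ k, B k | y n = b} (fun _ => (1 : ℝ))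
          (fun k => p k (x k)) =
          Set.indicator {x : ∀ k, A k | p n (x n) = b} (fun _ => (1 : ℝ)) x := fun x => rfl
      simp only [h3]
      linarith
    · exact (measurable_tailAlgebra_of_dependsOn (hqc n b).measurable
        fun y y' h => hqdep n b y y' h).stronglyMeasurable.aestronglyMeasurable
end

section
/- Let g be a g-function on X = S^ℕ such that, with r_n = var_n log g, Berbee's condition Σ_{n=1}^∞ exp(−(r_1 + ⋯ + r_n)) = ∞ holds, and let μ be a g-measure for g. Let π : S → S̃ be a surjection onto a finite set S̃ and π̂ : S^ℕ → S̃^ℕ the induced one-block factor map. Then there exists a g-function g̃ on Y = S̃^ℕ such that the pushforward measure μ∘π̂⁻¹ is a g-measure for g̃. -/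
/-!
The `g`-function of the factor is a limit of finite-volume Gibbs averages along the fibres of the
factor map. Fix an image sequence `y` and a boundary condition `z`, and weight each word
`x_0 ⋯ x_{n-1}` by `∏_{i<n} g(Tⁱ(xz))`, where `x_0` is free and `x_i` for `i ≥ 1` lies in the fibre
of the prescribed symbol. Let `h_n(z)` be the probability that `x_0` maps to `a`. The whole theorem
reduces to showing that `h_n` forgets `z`, uniformly in `y` (`gibbsAvg_abs_sub_le`).

Let `D_n` be the oscillation of `h_n` and `t_k = exp(-(r_1 + ⋯ + r_k))`. Reading a word from the
boundary inwards, the `k`-th symbol carries a weight `g` which dominates its infimum `m_k` over all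
boundary conditions, and `m_k ≥ e^{-r_k} g`. Splitting `g = m_k + (g - m_k)` at each step, and
thinning the surviving part so that exactly the fraction `t_k` of the mass survives `k` steps,
exhibits `h_n(z)` as a mixture: with mass `t_n` a value independent of `z`, and with mass
`t_{k-1} - t_k` an average of values of `h_{n-k}` (`gibbsSum_le_renewal`). The thinning factors are
nonincreasing in `k` precisely because `m_k ≥ e^{-r_k} g`. Hence
`D_n ≤ ∑_{k=1}^n (t_{k-1} - t_k) D_{n-k}`, so that `∑_{k ≤ n} t_k D_{n-k}` is nonincreasing in `n`,
and since `D` is nonincreasing, `D_n ≤ D_0 / ∑_{k ≤ n} t_k` (`renewal_bound`). Berbee's condition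
says exactly that this tends to `0`.

Consequently the `h_n` converge uniformly to a continuous `g`-function
(`exists_factor_gFunction`). The `g`-measure property of `μ`, iterated, expresses the measure of
cylinders of the factor as integrals of the Gibbs sums (`integral_gibbsSum`), so on cylinders of
length `N` the conditional probabilities of the factor measure agree with `h_{N+1}` up to the
loss-of-memory bound (`factor_cyl_close`); `measure_eq_of_cyl_close` upgrades this to the
conditional expectation identity.
-/


open MeasureTheory Filter

/-- Prepending a symbol: `a·x = (a, x_0, x_1, …)`. -/
def prepend {S : Type} (a : S) (x : ℕ → S) : ℕ → S :=
  fun n => Nat.casesOn n a x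

/-- The left shift `T : S^ℕ → S^ℕ`, `(Tx)_n = x_{n+1}`. -/
def shift {S : Type} (x : ℕ → S) : ℕ → S := fun n => x (n + 1)

/-- A `g`-function on `X = S^ℕ`: a continuous function `g : X → [0,1]` with
`∑_{a ∈ S} g(a·x) = 1` for all `x`. -/
def IsGFunction {S : Type} [Fintype S] [TopologicalSpace S]
    (g : (ℕ → S) → ℝ) : Prop :=
  Continuous g ∧ (∀ x, g x ∈ Set.Icc (0 : ℝ) 1) ∧
    ∀ x : ℕ → S, ∑ a : S, g (prepend a x) = 1

/-- `μ` is a `g`-measure for `g`: a shift-invariant Borel probability measure such that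
for every `a ∈ S` the function `x ↦ g(a·Tx)` is a version of the conditional expectation
of the indicator of `{x_0 = a}` given the σ-algebra generated by `(x_1, x_2, …)`. -/
def IsGMeasure {S : Type} [MeasurableSpace S]
    (g : (ℕ → S) → ℝ) (μ : Measure (ℕ → S)) : Prop :=
  IsProbabilityMeasure μ ∧ μ.map shift = μ ∧
    ∀ a : S,
      (fun x : ℕ → S => g (prepend a (shift x)))
        =ᵐ[μ]
      μ[Set.indicator {x : ℕ → S | x 0 = a} (fun _ => (1 : ℝ)) |
          MeasurableSpace.comap shift MeasurableSpace.pi]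

/-! ### Weighted transfer operators -/

section Transfer

variable {S : Type}

/-- The transfer operator `φ ↦ ∑_{s ∈ C} w(s·z) φ(s·z)` with weight `w`, the prepended symbol being
restricted to `C`. -/
def transfer (w : (ℕ → S) → ℝ) (C : Finset S) (φ : (ℕ → S) → ℝ) (z : ℕ → S) : ℝ :=
  ∑ s ∈ C, w (prepend s z) * φ (prepend s z)

/-- Unnormalised finite-volume Gibbs sum: `gibbsSum g C n F z` is the sum of
`F(xz) ∏_{i<n} g(Tⁱ(xz))` over words `x = x_0 ⋯ x_{n-1}` with `x_i ∈ C_i`. -/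
def gibbsSum (g : (ℕ → S) → ℝ) (C : ℕ → Finset S) : ℕ → ((ℕ → S) → ℝ) → (ℕ → S) → ℝ
  | 0, F => F
  | n + 1, F => transfer g (C n) (gibbsSum g C n F)

/-- Sum over words of length `k` built from the boundary inwards: the symbol placed at step `j < k`
is taken from `K j` and weighted by `m j`. -/
def outerSum (m : ℕ → (ℕ → S) → ℝ) (K : ℕ → Finset S) :
    ℕ → ((ℕ → S) → ℝ) → (ℕ → S) → ℝ
  | 0, φ => φ
  | k + 1, φ => outerSum m K k (transfer (m k) (K k) φ)

lemma transfer_nonneg {w : (ℕ → S) → ℝ} (hw : ∀ u, 0 ≤ w u) (C : Finset S)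
    {φ : (ℕ → S) → ℝ} (hφ : ∀ u, 0 ≤ φ u) (z : ℕ → S) : 0 ≤ transfer w C φ z :=
  Finset.sum_nonneg fun _ _ => mul_nonneg (hw _) (hφ _)

lemma transfer_pos {w : (ℕ → S) → ℝ} (hw : ∀ u, 0 < w u) {C : Finset S} (hC : C.Nonempty)
    {φ : (ℕ → S) → ℝ} (hφ : ∀ u, 0 < φ u) (z : ℕ → S) : 0 < transfer w C φ z :=
  Finset.sum_pos (fun _ _ => mul_pos (hw _) (hφ _)) hC

lemma transfer_linear (w : (ℕ → S) → ℝ) (C : Finset S) (a b : ℝ) (φ ψ : (ℕ → S) → ℝ) :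
    transfer w C (fun u => a * φ u - b * ψ u) =
      fun z => a * transfer w C φ z - b * transfer w C ψ z := by
  funext z
  simp only [transfer, Finset.mul_sum, ← Finset.sum_sub_distrib]
  exact Finset.sum_congr rfl fun _ _ => by ring

lemma gibbsSum_linear (g : (ℕ → S) → ℝ) (C : ℕ → Finset S) (n : ℕ) (a b : ℝ)
    (φ ψ : (ℕ → S) → ℝ) :
    gibbsSum g C n (fun u => a * φ u - b * ψ u) =
      fun z => a * gibbsSum g C n φ z - b * gibbsSum g C n ψ z := by
  induction n with
  | zero => rfl
  | succ n ih => simp only [gibbsSum, ih, transfer_linear]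

lemma gibbsSum_nonneg {g : (ℕ → S) → ℝ} (hg : ∀ u, 0 ≤ g u) (C : ℕ → Finset S) (n : ℕ)
    {F : (ℕ → S) → ℝ} (hF : ∀ u, 0 ≤ F u) : ∀ z, 0 ≤ gibbsSum g C n F z := by
  induction n with
  | zero => exact hF
  | succ n ih => exact transfer_nonneg hg _ ih

lemma gibbsSum_pos {g : (ℕ → S) → ℝ} (hg : ∀ u, 0 < g u) {C : ℕ → Finset S}
    (hC : ∀ i, (C i).Nonempty) (n : ℕ) {F : (ℕ → S) → ℝ} (hF : ∀ u, 0 < F u) :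
    ∀ z, 0 < gibbsSum g C n F z := by
  induction n with
  | zero => exact hF
  | succ n ih => exact transfer_pos hg (hC n) ih

lemma outerSum_nonneg {m : ℕ → (ℕ → S) → ℝ} (hm : ∀ k u, 0 ≤ m k u) (K : ℕ → Finset S) (k : ℕ) :
    ∀ {φ : (ℕ → S) → ℝ}, (∀ u, 0 ≤ φ u) → ∀ z, 0 ≤ outerSum m K k φ z := by
  induction k with
  | zero => exact fun h => h
  | succ k ih => exact fun h => ih (transfer_nonneg (hm k) _ h)

lemma outerSum_pos {m : ℕ → (ℕ → S) → ℝ} (hm : ∀ k u, 0 < m k u) {K : ℕ → Finset S}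
    (hK : ∀ i, (K i).Nonempty) (k : ℕ) :
    ∀ {φ : (ℕ → S) → ℝ}, (∀ u, 0 < φ u) → ∀ z, 0 < outerSum m K k φ z := by
  induction k with
  | zero => exact fun h => h
  | succ k ih => exact fun h => ih (transfer_pos (hm k) (hK k) h)

lemma outerSum_linear (m : ℕ → (ℕ → S) → ℝ) (K : ℕ → Finset S) (k : ℕ) (a b : ℝ) :
    ∀ (φ ψ : (ℕ → S) → ℝ) (z : ℕ → S), outerSum m K k (fun u => a * φ u - b * ψ u) z =
      a * outerSum m K k φ z - b * outerSum m K k ψ z := by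
  induction k with
  | zero => exact fun _ _ _ => rfl
  | succ k ih =>
    intro φ ψ z
    simp only [outerSum, transfer_linear]
    exact ih _ _ z

/-- If the weight `m j` sees only the first `j + 1` coordinates and `φ` only the first `k`, then the
sum over words of length `k` does not see the boundary condition. -/
lemma outerSum_const {m : ℕ → (ℕ → S) → ℝ}
    (hm : ∀ k u v, (∀ i < k + 1, u i = v i) → m k u = m k v) (K : ℕ → Finset S) (k : ℕ) :
    ∀ {φ : (ℕ → S) → ℝ}, (∀ u v, (∀ i < k, u i = v i) → φ u = φ v) →
      ∀ z z', outerSum m K k φ z = outerSum m K k φ z' := by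
  induction k with
  | zero => exact fun h z z' => h z z' (by simp)
  | succ k ih =>
    intro φ h z z'
    refine ih (fun u v huv => ?_) z z'
    refine Finset.sum_congr rfl fun s _ => ?_
    have : ∀ i < k + 1, prepend s u i = prepend s v i := by
      rintro (_ | i) hi
      · rfl
      · exact huv i (by omega)
    rw [hm k _ _ this, h _ _ this]

/-- Comparison of one step with weight `a • g` and one step with the smaller weight `b • m k`. -/
lemma outerSum_succ_le {g : (ℕ → S) → ℝ} {m : ℕ → (ℕ → S) → ℝ} (hm : ∀ k u, 0 ≤ m k u)
    (K : ℕ → Finset S) (k : ℕ) {a b : ℝ} (hab : ∀ u, b * m k u ≤ a * g u)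
    {φ : (ℕ → S) → ℝ} (hφ : ∀ u, 0 ≤ φ u) (z : ℕ → S) :
    b * outerSum m K (k + 1) φ z ≤ a * outerSum m K k (transfer g (K k) φ) z := by
  rw [← sub_nonneg, outerSum, ← outerSum_linear]
  refine outerSum_nonneg hm K k (fun u => ?_) z
  simp only [transfer, Finset.mul_sum, ← Finset.sum_sub_distrib]
  refine Finset.sum_nonneg fun s _ => ?_
  have := mul_le_mul_of_nonneg_right (hab (prepend s u)) (hφ (prepend s u))
  linarith

lemma le_outerSum_succ {g : (ℕ → S) → ℝ} {m : ℕ → (ℕ → S) → ℝ} (hm : ∀ k u, 0 ≤ m k u)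
    (K : ℕ → Finset S) (k : ℕ) {a b : ℝ} (hab : ∀ u, a * g u ≤ b * m k u)
    {φ : (ℕ → S) → ℝ} (hφ : ∀ u, 0 ≤ φ u) (z : ℕ → S) :
    a * outerSum m K k (transfer g (K k) φ) z ≤ b * outerSum m K (k + 1) φ z := by
  rw [← sub_nonneg, outerSum, ← outerSum_linear]
  refine outerSum_nonneg hm K k (fun u => ?_) z
  simp only [transfer, Finset.mul_sum, ← Finset.sum_sub_distrib]
  refine Finset.sum_nonneg fun s _ => ?_
  have := mul_le_mul_of_nonneg_right (hab (prepend s u)) (hφ (prepend s u))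
  linarith

/-! ### The renewal inequality -/

/-- Upper half of the renewal decomposition: up to the boundary-independent mass `t n`, the Gibbs
average of `F` is a mixture, with the deterministic weights `t k - t (k + 1)`, of averages of `F`
in the smaller volumes `n - 1 - k`. -/
lemma gibbsSum_le_renewal {g : (ℕ → S) → ℝ} {m : ℕ → (ℕ → S) → ℝ} {t : ℕ → ℝ}
    {C : ℕ → Finset S} (hC : ∀ i, (C i).Nonempty)
    (hm : ∀ k u, 0 < m k u) (hmg : ∀ k u, m k u ≤ g u)
    (ht : ∀ k, 0 < t k) (ht0 : t 0 = 1) (htm : ∀ k u, t (k + 1) * g u ≤ t k * m k u)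
    {n : ℕ} (F : (ℕ → S) → ℝ) (U : ℕ → ℝ)
    (hU : ∀ i < n, ∀ z, gibbsSum g C i F z ≤ U i * gibbsSum g C i (fun _ => 1) z) (z : ℕ → S) :
    gibbsSum g C n F z ≤
      (t n * (outerSum m (fun k => C (n - 1 - k)) n F z /
          outerSum m (fun k => C (n - 1 - k)) n (fun _ => 1) z) +
        ∑ k ∈ Finset.range n, (t k - t (k + 1)) * U (n - 1 - k)) *
        gibbsSum g C n (fun _ => 1) z := by
  have hg : ∀ u, 0 < g u := fun u => (hm 0 u).trans_le (hmg 0 u)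
  have hm' : ∀ k u, 0 ≤ m k u := fun k u => (hm k u).le
  set K : ℕ → Finset S := fun k => C (n - 1 - k) with hK
  have hKne : ∀ i, (K i).Nonempty := fun i => hC _
  set Z : ℝ := gibbsSum g C n (fun _ => 1) z with hZ
  have hZpos : 0 < Z := gibbsSum_pos hg hC n (fun _ => one_pos) z
  -- `B k` and `a k`: the first `k` symbols weighted by `m`, the remaining ones by `g`
  set B : ℕ → ℝ := fun k => outerSum m K k (gibbsSum g C (n - k) fun _ => 1) z with hB
  set a : ℕ → ℝ := fun k => outerSum m K k (gibbsSum g C (n - k) F) z with ha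
  have hBpos : ∀ k, 0 < B k := fun k =>
    outerSum_pos hm hKne k (gibbsSum_pos hg hC (n - k) fun _ => one_pos) z
  have hstep : ∀ k < n, ∀ G : (ℕ → S) → ℝ,
      gibbsSum g C (n - k) G = transfer g (K k) (gibbsSum g C (n - (k + 1)) G) := by
    intro k hk G
    have h1 : n - k = (n - 1 - k) + 1 := by omega
    have h2 : n - (k + 1) = n - 1 - k := by omega
    rw [h1, h2]
    rfl
  -- `Φ k` thins the surviving mass to exactly `t k`
  set Φ : ℕ → ℝ := fun k => t k * Z / B k with hΦ
  have hΦpos : ∀ k, 0 < Φ k := fun k => div_pos (mul_pos (ht k) hZpos) (hBpos k)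
  have hΦB : ∀ k, Φ k * B k = t k * Z := fun k => div_mul_cancel₀ _ (hBpos k).ne'
  have hΦanti : ∀ k < n, Φ (k + 1) ≤ Φ k := by
    intro k hk
    have h : t (k + 1) * B k ≤ t k * B (k + 1) := by
      simp only [hB]
      rw [hstep k hk]
      exact le_outerSum_succ hm' K k (htm k)
        (fun u => (gibbsSum_pos hg hC _ (fun _ => one_pos) u).le) z
    rw [hΦ]
    simp only
    rw [div_le_div_iff₀ (hBpos _) (hBpos _)]
    nlinarith
  have hincr : ∀ k < n, Φ k * a k - Φ (k + 1) * a (k + 1) ≤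
      (t k - t (k + 1)) * U (n - 1 - k) * Z := by
    intro k hk
    have h2 : n - (k + 1) = n - 1 - k := by omega
    have key := outerSum_succ_le (g := g) hm' K k (a := Φ k) (b := Φ (k + 1))
      (fun u => mul_le_mul (hΦanti k hk) (hmg k u) (hm' k u) (hΦpos k).le)
      (φ := fun u => U (n - 1 - k) * gibbsSum g C (n - (k + 1)) (fun _ => 1) u -
        1 * gibbsSum g C (n - (k + 1)) F u)
      (fun u => by
        have := hU (n - 1 - k) (by omega) u
        rw [h2]; linarith) z
    rw [outerSum_linear, transfer_linear, outerSum_linear, ← hstep k hk, ← hstep k hk] at key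
    have e1 := hΦB k
    have e2 := hΦB (k + 1)
    simp only [ha]
    simp only [hB] at e1 e2
    linear_combination key + U (n - 1 - k) * e1 - U (n - 1 - k) * e2
  have hsum : Φ 0 * a 0 - Φ n * a n ≤
      ∑ k ∈ Finset.range n, (t k - t (k + 1)) * U (n - 1 - k) * Z := by
    rw [← Finset.sum_range_sub' (fun k => Φ k * a k) n]
    exact Finset.sum_le_sum fun k hk => hincr k (Finset.mem_range.1 hk)
  have h0 : Φ 0 = 1 := by
    have : B 0 = Z := rfl
    simp only [hΦ]
    rw [this, ht0, one_mul, div_self hZpos.ne']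
  have hn : Φ n * a n =
      t n * (outerSum m K n F z / outerSum m K n (fun _ => 1) z) * Z := by
    have e1 : B n = outerSum m K n (fun _ => 1) z := by simp only [hB, Nat.sub_self]; rfl
    have e2 : a n = outerSum m K n F z := by simp only [ha, Nat.sub_self]; rfl
    simp only [hΦ]
    rw [e1, e2]
    ring
  rw [h0, one_mul, hn] at hsum
  rw [add_mul, Finset.sum_mul]
  have e0 : a 0 = gibbsSum g C n F z := rfl
  linarith

/-- Deterministic renewal lemma: a nonincreasing sequence satisfying the renewal inequality with
tails `t` decays at least like the reciprocal of `∑ t`, because `∑_{k ≤ N} t_k D_{N-k}` is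
nonincreasing in `N`. -/
lemma renewal_bound {t D : ℕ → ℝ} (ht : ∀ k, 0 ≤ t k) (ht0 : t 0 = 1) (hD : Antitone D)
    (h : ∀ n, D (n + 1) ≤ ∑ k ∈ Finset.range (n + 1), (t k - t (k + 1)) * D (n - k)) (N : ℕ) :
    D N * ∑ k ∈ Finset.range (N + 1), t k ≤ D 0 := by
  have hV : ∀ N, ∑ k ∈ Finset.range (N + 1), t k * D (N - k) ≤ D 0 := by
    intro N
    induction N with
    | zero => simp [ht0]
    | succ N ih =>
      refine le_trans ?_ ih
      rw [Finset.sum_range_succ', ht0]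
      have := h N
      simp only [sub_mul, Finset.sum_sub_distrib] at this
      simp only [Nat.add_sub_add_right, Nat.sub_zero]
      linarith
  refine le_trans ?_ (hV N)
  rw [Finset.mul_sum]
  refine Finset.sum_le_sum fun k _ => ?_
  rw [mul_comm]
  exact mul_le_mul_of_nonneg_left (hD (Nat.sub_le N k)) (ht k)

/-- The Gibbs average of `F` in volume `n` with boundary condition `z`. -/
noncomputable def gibbsAvg (g : (ℕ → S) → ℝ) (C : ℕ → Finset S) (n : ℕ) (F : (ℕ → S) → ℝ) (z : ℕ → S) : ℝ :=
  gibbsSum g C n F z / gibbsSum g C n (fun _ => 1) z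

lemma gibbsAvg_mem_of_mem {g : (ℕ → S) → ℝ} (hg : ∀ u, 0 < g u) {C : ℕ → Finset S}
    (hC : ∀ i, (C i).Nonempty) {F : (ℕ → S) → ℝ} {l u : ℝ} {n : ℕ}
    (h : ∀ z, gibbsAvg g C n F z ∈ Set.Icc l u) (k : ℕ) (z : ℕ → S) :
    gibbsAvg g C (n + k) F z ∈ Set.Icc l u := by
  have pos : ∀ n z, 0 < gibbsSum g C n (fun _ => 1) z :=
    fun n => gibbsSum_pos hg hC n fun _ => one_pos
  induction k generalizing z with
  | zero => exact h z
  | succ k ih =>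
    have e : ∀ G, gibbsSum g C (n + (k + 1)) G = transfer g (C (n + k)) (gibbsSum g C (n + k) G) :=
      fun _ => rfl
    constructor
    · rw [gibbsAvg, le_div_iff₀ (pos _ _), e, e, transfer, transfer, Finset.mul_sum]
      refine Finset.sum_le_sum fun s _ => ?_
      have := (le_div_iff₀ (pos _ _)).1 (ih (prepend s z)).1
      nlinarith [hg (prepend s z)]
    · rw [gibbsAvg, div_le_iff₀ (pos _ _), e, e, transfer, transfer, Finset.mul_sum]
      refine Finset.sum_le_sum fun s _ => ?_
      have := (div_le_iff₀ (pos _ _)).1 (ih (prepend s z)).2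
      nlinarith [hg (prepend s z)]

/-- Quantitative loss of memory: the Gibbs average of a `[0,1]`-valued function of the first
coordinate depends on the boundary condition by at most `1 / ∑_{k ≤ n} t_k`. -/
lemma gibbsAvg_sub_le {g : (ℕ → S) → ℝ} {m : ℕ → (ℕ → S) → ℝ} {t : ℕ → ℝ}
    {C : ℕ → Finset S} (hC : ∀ i, (C i).Nonempty)
    (hm : ∀ k u, 0 < m k u) (hmg : ∀ k u, m k u ≤ g u)
    (hmloc : ∀ k u v, (∀ i < k + 1, u i = v i) → m k u = m k v)
    (ht : ∀ k, 0 < t k) (ht0 : t 0 = 1) (htm : ∀ k u, t (k + 1) * g u ≤ t k * m k u)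
    {F : (ℕ → S) → ℝ} (hF : ∀ u, F u ∈ Set.Icc (0 : ℝ) 1) (hFloc : ∀ u v, u 0 = v 0 → F u = F v)
    (n : ℕ) (z z' : ℕ → S) :
    gibbsAvg g C n F z - gibbsAvg g C n F z' ≤ 1 / ∑ k ∈ Finset.range (n + 1), t k := by
  have hg : ∀ u, 0 < g u := fun u => (hm 0 u).trans_le (hmg 0 u)
  have : Nonempty (ℕ → S) := ⟨z⟩
  have pos : ∀ n z, 0 < gibbsSum g C n (fun _ => 1) z :=
    fun n => gibbsSum_pos hg hC n fun _ => one_pos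
  have h01 : ∀ n z, gibbsAvg g C n F z ∈ Set.Icc (0 : ℝ) 1 := by
    intro n z
    have := gibbsAvg_mem_of_mem (n := 0) hg hC (F := F) (l := 0) (u := 1)
      (fun z => by simpa [gibbsAvg, gibbsSum] using hF z) n z
    rwa [zero_add] at this
  set U : ℕ → ℝ := fun n => ⨆ z, gibbsAvg g C n F z with hU
  set L : ℕ → ℝ := fun n => ⨅ z, gibbsAvg g C n F z with hL
  have hleU : ∀ n z, gibbsAvg g C n F z ≤ U n := fun n z =>
    le_ciSup (f := fun z => gibbsAvg g C n F z) ⟨1, by rintro _ ⟨z, rfl⟩; exact (h01 n z).2⟩ z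
  have hLle : ∀ n z, L n ≤ gibbsAvg g C n F z := fun n z =>
    ciInf_le (f := fun z => gibbsAvg g C n F z) ⟨0, by rintro _ ⟨z, rfl⟩; exact (h01 n z).1⟩ z
  have hD : Antitone fun n => U n - L n := by
    refine antitone_nat_of_succ_le fun n => ?_
    have := fun z => gibbsAvg_mem_of_mem hg hC (fun z => ⟨hLle n z, hleU n z⟩) 1 z
    exact sub_le_sub (ciSup_le fun z => (this z).2) (le_ciInf fun z => (this z).1)
  have hren : ∀ n, U (n + 1) - L (n + 1) ≤
      ∑ k ∈ Finset.range (n + 1), (t k - t (k + 1)) * (U (n - k) - L (n - k)) := by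
    intro n
    set K : ℕ → Finset S := fun k => C (n + 1 - 1 - k) with hK
    -- the value on the coupled part, the same for all boundary conditions
    set c : ℝ := outerSum m K (n + 1) F z / outerSum m K (n + 1) (fun _ => 1) z with hc
    have hc' : ∀ y, outerSum m K (n + 1) F y / outerSum m K (n + 1) (fun _ => 1) y = c := by
      intro y
      rw [hc, outerSum_const hmloc K (n + 1) (φ := F) (fun u v h => hFloc u v (h 0 (by omega))) y z,
        outerSum_const hmloc K (n + 1) (φ := fun _ => 1) (fun _ _ _ => rfl) y z]
    have up : U (n + 1) ≤ t (n + 1) * c +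
        ∑ k ∈ Finset.range (n + 1), (t k - t (k + 1)) * U (n - k) := by
      refine ciSup_le fun y => ?_
      rw [gibbsAvg, div_le_iff₀ (pos _ _)]
      have := gibbsSum_le_renewal hC hm hmg ht ht0 htm (n := n + 1) F U
        (fun i _ y => (div_le_iff₀ (pos _ _)).1 (hleU i y)) y
      rw [hc' y] at this
      exact this
    have lo : t (n + 1) * c + ∑ k ∈ Finset.range (n + 1), (t k - t (k + 1)) * L (n - k) ≤
        L (n + 1) := by
      refine le_ciInf fun y => ?_
      rw [gibbsAvg, le_div_iff₀ (pos _ _)]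
      -- the upper bound applied to `-F`
      have neg : ∀ i y, gibbsSum g C i (fun u => 0 * F u - 1 * F u) y = - gibbsSum g C i F y := by
        intro i y
        rw [gibbsSum_linear]
        ring
      have := gibbsSum_le_renewal hC hm hmg ht ht0 htm (n := n + 1) (fun u => 0 * F u - 1 * F u)
        (fun i => - L i)
        (fun i _ y => by
          have := (le_div_iff₀ (pos _ _)).1 (hLle i y)
          rw [neg]
          linarith) y
      rw [neg, outerSum_linear] at this
      have e : (0 * outerSum m K (n + 1) F y - 1 * outerSum m K (n + 1) F y) /
          outerSum m K (n + 1) (fun _ => 1) y = - c := by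
        rw [← hc' y]
        ring
      rw [e] at this
      simp only [mul_neg, Finset.sum_neg_distrib] at this
      have e2 : n + 1 - 1 = n := rfl
      rw [e2] at this
      nlinarith
    simp only [mul_sub, Finset.sum_sub_distrib] at up lo ⊢
    linarith
  have hfin := renewal_bound (fun k => (ht k).le) ht0 hD hren n
  have hTpos : 0 < ∑ k ∈ Finset.range (n + 1), t k :=
    Finset.sum_pos (fun k _ => ht k) ⟨0, by simp⟩
  have hD0 : U 0 - L 0 ≤ 1 := by
    have h1 : U 0 ≤ 1 := ciSup_le fun z => (h01 0 z).2
    have h2 : 0 ≤ L 0 := le_ciInf fun z => (h01 0 z).1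
    linarith
  rw [le_div_iff₀ hTpos]
  refine le_trans (mul_le_mul_of_nonneg_right ?_ hTpos.le) (hfin.trans hD0)
  exact sub_le_sub (hleU n z) (hLle n z')

end Transfer

/-! ### Loss of memory under Berbee's condition -/

section Berbee

variable {S : Type}

/-- The infimum of `g` over all points agreeing with `u` on the first `k + 1` coordinates. -/
noncomputable def infWeight (g : (ℕ → S) → ℝ) (k : ℕ) (u : ℕ → S) : ℝ :=
  ⨅ v : ℕ → S, g fun i => if i < k + 1 then u i else v i

/-- `memoryBound r n = 1 / ∑_{k ≤ n} exp(-(r_1 + ⋯ + r_k))`. -/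
noncomputable def memoryBound (r : ℕ → ℝ) (n : ℕ) : ℝ :=
  1 / ∑ k ∈ Finset.range (n + 1), Real.exp (-(∑ i ∈ Finset.Icc 1 k, r i))

lemma memoryBound_nonneg (r : ℕ → ℝ) (n : ℕ) : 0 ≤ memoryBound r n :=
  div_nonneg zero_le_one (Finset.sum_nonneg fun _ _ => (Real.exp_pos _).le)

lemma tendsto_memoryBound {r : ℕ → ℝ}
    (hBerbee : ¬ Summable fun m : ℕ => Real.exp (-(∑ i ∈ Finset.Icc 1 m, r i))) :
    Tendsto (memoryBound r) atTop (nhds 0) := by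
  have h := (not_summable_iff_tendsto_nat_atTop_of_nonneg
    (fun m => (Real.exp_pos (-(∑ i ∈ Finset.Icc 1 m, r i))).le)).1 hBerbee
  exact (tendsto_const_nhds.div_atTop h).comp (tendsto_add_atTop_nat 1)

lemma gibbsAvg_abs_sub_le {g : (ℕ → S) → ℝ} (hgpos : ∀ x, 0 < g x) {r : ℕ → ℝ}
    (hr : ∀ n, 1 ≤ n → ∀ x y : ℕ → S,
      (∀ i, i < n → x i = y i) → |Real.log (g x) - Real.log (g y)| ≤ r n)
    {C : ℕ → Finset S} (hC : ∀ i, (C i).Nonempty)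
    {F : (ℕ → S) → ℝ} (hF : ∀ u, F u ∈ Set.Icc (0 : ℝ) 1) (hFloc : ∀ u v, u 0 = v 0 → F u = F v)
    (n : ℕ) (z z' : ℕ → S) :
    |gibbsAvg g C n F z - gibbsAvg g C n F z'| ≤ memoryBound r n := by
  have hne : Nonempty (ℕ → S) := ⟨z⟩
  have hlow : ∀ k u, Real.exp (-r (k + 1)) * g u ≤ infWeight g k u := by
    intro k u
    refine le_ciInf fun v => ?_
    set w : ℕ → S := fun i => if i < k + 1 then u i else v i with hw
    have h := (abs_le.1 (hr (k + 1) (by omega) u w fun i hi => (if_pos hi).symm)).2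
    rw [← Real.exp_log (hgpos u), ← Real.exp_log (hgpos w), ← Real.exp_add]
    exact Real.exp_le_exp.2 (by linarith)
  have hbdd : ∀ k (u : ℕ → S),
      BddBelow (Set.range fun v : ℕ → S => g fun i => if i < k + 1 then u i else v i) :=
    fun k u => ⟨0, by rintro _ ⟨v, rfl⟩; exact (hgpos _).le⟩
  have main := gibbsAvg_sub_le (g := g) (m := infWeight g)
    (t := fun k => Real.exp (-(∑ i ∈ Finset.Icc 1 k, r i))) hC
    (fun k u => (mul_pos (Real.exp_pos _) (hgpos u)).trans_le (hlow k u))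
    (fun k u => (ciInf_le (hbdd k u) u).trans_eq (by simp))
    (fun k u v h => by
      have : (fun y : ℕ → S => g fun i => if i < k + 1 then u i else y i) =
          fun y : ℕ → S => g fun i => if i < k + 1 then v i else y i := by
        funext y
        congr 1
        funext i
        split_ifs with hi
        · exact h i hi
        · rfl
      simp only [infWeight, this])
    (fun k => Real.exp_pos _) (by simp)
    (fun k u => by
      have : -(∑ i ∈ Finset.Icc 1 (k + 1), r i) =
          -(∑ i ∈ Finset.Icc 1 k, r i) + -r (k + 1) := by
        rw [Finset.sum_Icc_succ_top (by omega)]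
        ring
      rw [this, Real.exp_add, mul_assoc]
      exact mul_le_mul_of_nonneg_left (hlow k u) (Real.exp_pos _).le) hF hFloc n
  exact abs_le.2 ⟨by have := main z' z; rw [memoryBound]; linarith, main z z'⟩

end Berbee

/-! ### The `g`-function of the factor -/

section Factor

variable {S S' : Type}

/-- A function on a product of discrete spaces depending on finitely many coordinates is
continuous. -/
lemma continuous_of_local [TopologicalSpace S] [DiscreteTopology S] {f : (ℕ → S) → ℝ} (N : ℕ)
    (h : ∀ u v, (∀ i < N, u i = v i) → f u = f v) : Continuous f := by
  refine continuous_iff_continuousAt.2 fun v => ?_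
  have hev : ∀ᶠ w in nhds v, ∀ i ∈ Finset.range N, w i = v i := by
    rw [Filter.eventually_all_finset]
    intro i _
    have hc : ContinuousAt (fun w : ℕ → S => w i) v := (continuous_apply i).continuousAt
    exact hc.eventually (p := fun s => s = v i) (by simp [nhds_discrete])
  refine (continuousAt_const (y := f v)).congr ?_
  filter_upwards [hev] with w hw
  exact (h w v fun i hi => hw i (Finset.mem_range.2 hi)).symm

lemma gibbsSum_congr (g : (ℕ → S) → ℝ) {C C' : ℕ → Finset S} (n : ℕ) (F : (ℕ → S) → ℝ)
    (h : ∀ i < n, C i = C' i) : gibbsSum g C n F = gibbsSum g C' n F := by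
  induction n with
  | zero => rfl
  | succ n ih => rw [gibbsSum, gibbsSum, ih fun i hi => h i (by omega), h n (by omega)]

lemma gibbsSum_sum {ι : Type} [Fintype ι] (g : (ℕ → S) → ℝ) (C : ℕ → Finset S) (n : ℕ)
    (F : ι → (ℕ → S) → ℝ) :
    gibbsSum g C n (fun u => ∑ a, F a u) = fun z => ∑ a, gibbsSum g C n (F a) z := by
  induction n with
  | zero => rfl
  | succ n ih =>
    funext z
    simp only [gibbsSum, ih, transfer, Finset.mul_sum]
    exact Finset.sum_comm

open Classical in
/-- The symbols allowed at each site when the image sequence is prescribed to be `v` except at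
site `0`, which is left free. -/
noncomputable def fibre [Fintype S] (p : S → S') (v : ℕ → S') : ℕ → Finset S
  | 0 => Finset.univ
  | i + 1 => Finset.univ.filter fun s => p s = v (i + 1)

open Classical in
/-- The indicator of `{x | p x_0 = a}`. -/
noncomputable def headInd (p : S → S') (a : S') (x : ℕ → S) : ℝ := if p (x 0) = a then 1 else 0

lemma headInd_mem (p : S → S') (a : S') (x : ℕ → S) : headInd p a x ∈ Set.Icc (0 : ℝ) 1 := by
  unfold headInd
  split_ifs <;> simp

lemma headInd_local (p : S → S') (a : S') (u v : ℕ → S) (h : u 0 = v 0) :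
    headInd p a u = headInd p a v := by
  unfold headInd
  rw [h]

lemma fibre_nonempty [Fintype S] [Nonempty S] {p : S → S'} (hp : Function.Surjective p)
    (v : ℕ → S') : ∀ i, (fibre p v i).Nonempty
  | 0 => Finset.univ_nonempty
  | i + 1 => by
    obtain ⟨s, hs⟩ := hp (v (i + 1))
    exact ⟨s, by simp [fibre, hs]⟩

lemma fibre_congr [Fintype S] (p : S → S') {u v : ℕ → S'} {i : ℕ} (h : 1 ≤ i → u i = v i) :
    fibre p u i = fibre p v i := by
  cases i with
  | zero => rfl
  | succ i => rw [fibre, fibre, h (by omega)]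

/-- Finite-volume approximation, with boundary condition `z`, of the `g`-function of the factor. -/
noncomputable def approxG [Fintype S] (g : (ℕ → S) → ℝ) (p : S → S') (z : ℕ → S) (n : ℕ)
    (v : ℕ → S') : ℝ :=
  gibbsAvg g (fibre p v) n (headInd p (v 0)) z

lemma approxG_local [Fintype S] (g : (ℕ → S) → ℝ) (p : S → S') (z : ℕ → S) (n : ℕ)
    (u v : ℕ → S') (h0 : u 0 = v 0) (h : ∀ i < n, u i = v i) :
    approxG g p z n u = approxG g p z n v := by
  have hc : ∀ i < n, fibre p u i = fibre p v i := fun i hi => fibre_congr p fun _ => h i hi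
  simp only [approxG, gibbsAvg, gibbsSum_congr g n _ hc, h0]

lemma approxG_sum [Fintype S] [Nonempty S] [Fintype S'] {g : (ℕ → S) → ℝ}
    (hgpos : ∀ x, 0 < g x) {p : S → S'}
    (hp : Function.Surjective p) (z : ℕ → S) (n : ℕ) (y : ℕ → S') :
    ∑ a, approxG g p z n (prepend a y) = 1 := by
  classical
  have hne : Nonempty S' := (inferInstance : Nonempty S).map p
  obtain ⟨b⟩ := hne
  have hc : ∀ a, fibre p (prepend a y) = fibre p (prepend b y) := by
    intro a
    funext i
    refine fibre_congr p fun hi => ?_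
    cases i with
    | zero => omega
    | succ i => rfl
  have h1 : ∀ a, approxG g p z n (prepend a y) =
      gibbsSum g (fibre p (prepend b y)) n (headInd p a) z /
        gibbsSum g (fibre p (prepend b y)) n (fun _ => 1) z := by
    intro a
    rw [approxG, hc a]
    rfl
  have h2 : (fun u : ℕ → S => ∑ a, headInd p a u) = fun _ => (1 : ℝ) := by
    funext u
    simp [headInd]
  simp only [h1]
  rw [← Finset.sum_div, ← congrFun (gibbsSum_sum g (fibre p (prepend b y)) n (headInd p)) z, h2]
  exact div_self (gibbsSum_pos hgpos (fibre_nonempty hp _) n (fun _ => one_pos) z).ne'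

/-- The limit of the finite-volume approximations is a `g`-function, and is approached uniformly. -/
lemma exists_factor_gFunction [Fintype S] [Nonempty S] [Fintype S'] [TopologicalSpace S']
    [DiscreteTopology S'] {g : (ℕ → S) → ℝ} (hgpos : ∀ x, 0 < g x) {r : ℕ → ℝ}
    (hr : ∀ n, 1 ≤ n → ∀ x y : ℕ → S,
      (∀ i, i < n → x i = y i) → |Real.log (g x) - Real.log (g y)| ≤ r n)
    (hBerbee : ¬ Summable fun m : ℕ => Real.exp (-(∑ i ∈ Finset.Icc 1 m, r i)))
    {p : S → S'} (hp : Function.Surjective p) (z : ℕ → S) :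
    ∃ g' : (ℕ → S') → ℝ, IsGFunction g' ∧
      ∀ n v, |g' v - approxG g p z n v| ≤ memoryBound r n := by
  have hε := tendsto_memoryBound hBerbee
  have hcauchy : ∀ v n k, |approxG g p z (n + k) v - approxG g p z n v| ≤ memoryBound r n := by
    intro v n k
    have hnear := fun y => abs_le.1 (gibbsAvg_abs_sub_le hgpos hr (fibre_nonempty hp v)
      (headInd_mem p (v 0)) (headInd_local p (v 0)) n y z)
    have := gibbsAvg_mem_of_mem hgpos (fibre_nonempty hp v) (F := headInd p (v 0)) (n := n)
      (l := approxG g p z n v - memoryBound r n) (u := approxG g p z n v + memoryBound r n)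
      (fun y => ⟨by have := (hnear y).1; rw [approxG]; linarith,
        by have := (hnear y).2; rw [approxG]; linarith⟩) k z
    exact abs_le.2 ⟨by have := this.1; rw [approxG]; linarith,
      by have := this.2; rw [approxG]; linarith⟩
  have hlim : ∀ v, ∃ l, Tendsto (fun n => approxG g p z n v) atTop (nhds l) := by
    intro v
    refine cauchySeq_tendsto_of_complete (cauchySeq_of_le_tendsto_0' (memoryBound r) ?_ hε)
    intro n m hnm
    obtain ⟨k, rfl⟩ := Nat.exists_eq_add_of_le hnm
    rw [dist_comm]
    exact hcauchy v n k
  choose g' hg' using hlim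
  have hclose : ∀ n v, |g' v - approxG g p z n v| ≤ memoryBound r n := by
    intro n v
    refine le_of_tendsto (((hg' v).sub_const _).abs) ?_
    filter_upwards [eventually_ge_atTop n] with m hm
    obtain ⟨k, rfl⟩ := Nat.exists_eq_add_of_le hm
    exact hcauchy v n k
  refine ⟨g', ⟨?_, ?_, ?_⟩, hclose⟩
  · have hunif : TendstoUniformly (fun n v => approxG g p z n v) g' atTop := by
      rw [Metric.tendstoUniformly_iff]
      intro e he
      filter_upwards [hε.eventually (gt_mem_nhds he)] with n hn v
      exact (hclose n v).trans_lt hn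
    exact hunif.continuous
      (Frequently.of_forall fun n => continuous_of_local (n + 1) fun u v h =>
        approxG_local g p z n u v (h 0 (by omega)) fun i hi => h i (by omega))
  · intro v
    refine isClosed_Icc.mem_of_tendsto (hg' v) (Eventually.of_forall fun n => ?_)
    have := gibbsAvg_mem_of_mem (n := 0) hgpos (fibre_nonempty hp v) (F := headInd p (v 0))
      (l := 0) (u := 1)
      (fun z => by simpa [gibbsAvg, gibbsSum] using headInd_mem p (v 0) z) n z
    rwa [zero_add] at this
  · intro y
    have h1 := tendsto_finsetSum Finset.univ fun a _ => hg' (prepend a y)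
    simp only [approxG_sum hgpos hp] at h1
    exact tendsto_nhds_unique h1 tendsto_const_nhds

end Factor

/-! ### Duality with the `g`-measure -/

section Duality

lemma continuous_prepend {S : Type} [TopologicalSpace S] (s : S) : Continuous (prepend s) := by
  refine continuous_pi fun i => ?_
  cases i with
  | zero => exact continuous_const
  | succ i => exact continuous_apply i

lemma measurable_shift {S : Type} [MeasurableSpace S] : Measurable (shift : (ℕ → S) → ℕ → S) :=
  measurable_pi_lambda _ fun i => measurable_pi_apply (i + 1)

lemma prepend_shift {S : Type} {s : S} {x : ℕ → S} (h : x 0 = s) : prepend s (shift x) = x := by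
  funext i
  cases i with
  | zero => exact h.symm
  | succ i => rfl

open Classical in
lemma gibbsSum_coord_ite {S : Type} (g : (ℕ → S) → ℝ) (C : ℕ → Finset S) (n : ℕ) (D : Finset S)
    (F : (ℕ → S) → ℝ) : ∀ (j : ℕ) (z : ℕ → S),
      gibbsSum g C n (fun x => if x (n + j) ∈ D then F x else 0) z =
        if z j ∈ D then gibbsSum g C n F z else 0 := by
  induction n with
  | zero => intro j z; simp [gibbsSum]
  | succ n ih =>
    intro j z
    have e : n + 1 + j = n + (j + 1) := by omega
    simp only [gibbsSum, transfer, e, ih (j + 1)]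
    have : ∀ s, prepend s z (j + 1) = z j := fun _ => rfl
    simp only [this]
    split_ifs <;> simp

lemma measurableSet_coord {S : Type} [MeasurableSpace S] [DiscreteMeasurableSpace S] (i : ℕ)
    (s : S) : MeasurableSet {x : ℕ → S | x i = s} := by
  have h : Measurable fun x : ℕ → S => x i := measurable_pi_apply i
  exact h (measurableSet_singleton s)

variable {S : Type} [Fintype S] [TopologicalSpace S] [DiscreteTopology S]
  [MeasurableSpace S] [DiscreteMeasurableSpace S]

lemma continuous_transfer {S : Type} [TopologicalSpace S] {w φ : (ℕ → S) → ℝ} (hw : Continuous w) (hφ : Continuous φ)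
    (C : Finset S) : Continuous (transfer w C φ) :=
  continuous_finsetSum _ fun s _ =>
    (hw.comp (continuous_prepend s)).mul (hφ.comp (continuous_prepend s))

lemma continuous_gibbsSum {S : Type} [TopologicalSpace S] {g F : (ℕ → S) → ℝ} (hg : Continuous g) (hF : Continuous F)
    (C : ℕ → Finset S) (n : ℕ) : Continuous (gibbsSum g C n F) := by
  induction n with
  | zero => exact hF
  | succ n ih => exact continuous_transfer hg ih _

lemma integrable_of_continuous {F : (ℕ → S) → ℝ} (hF : Continuous F) (μ : Measure (ℕ → S))
    [IsFiniteMeasure μ] : Integrable F μ :=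
  hF.integrable_of_hasCompactSupport (HasCompactSupport.of_compactSpace F)

open Classical in
lemma continuous_coord_ite {S : Type} [TopologicalSpace S] [DiscreteTopology S]
    {F : (ℕ → S) → ℝ} (hF : Continuous F) (n : ℕ) (D : Finset S) :
    Continuous fun x : ℕ → S => if x n ∈ D then F x else 0 := by
  have h : Continuous fun x : ℕ → S => if x n ∈ D then (1 : ℝ) else 0 :=
    continuous_of_local (n + 1) fun u v huv => by rw [huv n (by omega)]
  refine (h.mul hF).congr fun x => ?_
  simp

open Classical in
/-- The defining property of a `g`-measure in dual form. -/
lemma integral_transfer {g : (ℕ → S) → ℝ} (hg : IsGFunction g) {μ : Measure (ℕ → S)}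
    (hμ : IsGMeasure g μ) (C : Finset S) {F : (ℕ → S) → ℝ} (hF : Continuous F) :
    ∫ x, transfer g C F x ∂μ = ∫ x, (if x 0 ∈ C then F x else 0) ∂μ := by
  obtain ⟨hprob, hinv, hcond⟩ := hμ
  have hm : MeasurableSpace.comap shift MeasurableSpace.pi ≤
      (MeasurableSpace.pi : MeasurableSpace (ℕ → S)) := measurable_shift.comap_le
  have hcoord : ∀ s : S, MeasurableSet {x : ℕ → S | x 0 = s} := measurableSet_coord 0
  have key : ∀ s : S, ∫ x, g (prepend s x) * F (prepend s x) ∂μ =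
      ∫ x, (if x 0 = s then F x else 0) ∂μ := by
    intro s
    have hFs : Continuous fun x => F (prepend s x) := hF.comp (continuous_prepend s)
    have hgs : Continuous fun x => g (prepend s x) := hg.1.comp (continuous_prepend s)
    have hind : Integrable (Set.indicator {x : ℕ → S | x 0 = s} fun _ => (1 : ℝ)) μ :=
      (integrable_const 1).indicator (hcoord s)
    have hmeas : StronglyMeasurable[MeasurableSpace.comap shift MeasurableSpace.pi]
        fun x : ℕ → S => F (prepend s (shift x)) :=
      (hFs.measurable.comp (comap_measurable shift)).stronglyMeasurable
    have hprod : Integrable ((fun x : ℕ → S => F (prepend s (shift x))) *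
        Set.indicator {x : ℕ → S | x 0 = s} fun _ => (1 : ℝ)) μ := by
      have : ((fun x : ℕ → S => F (prepend s (shift x))) *
          Set.indicator {x : ℕ → S | x 0 = s} fun _ => (1 : ℝ)) =
          Set.indicator {x : ℕ → S | x 0 = s} F := by
        funext x
        by_cases hx : x 0 = s
        · simp [hx, prepend_shift hx]
        · simp [hx]
      rw [this]
      exact (integrable_of_continuous hF μ).indicator (hcoord s)
    calc ∫ x, g (prepend s x) * F (prepend s x) ∂μ
        = ∫ x, g (prepend s x) * F (prepend s x) ∂(μ.map shift) := by rw [hinv]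
      _ = ∫ x, g (prepend s (shift x)) * F (prepend s (shift x)) ∂μ :=
          integral_map measurable_shift.aemeasurable
            (hgs.mul hFs).measurable.aestronglyMeasurable
      _ = ∫ x, (μ[(fun x : ℕ → S => F (prepend s (shift x))) *
            Set.indicator {x : ℕ → S | x 0 = s} (fun _ => (1 : ℝ)) |
              MeasurableSpace.comap shift MeasurableSpace.pi]) x ∂μ := by
          refine integral_congr_ae ?_
          filter_upwards [hcond s, condExp_mul_of_stronglyMeasurable_left hmeas hprod hind]
            with x h1 h2
          rw [h2, h1, Pi.mul_apply, mul_comm]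
      _ = ∫ x, (if x 0 = s then F x else 0) ∂μ := by
          rw [integral_condExp hm]
          refine integral_congr_ae (Eventually.of_forall fun x => ?_)
          by_cases hx : x 0 = s
          · simp [hx, prepend_shift hx]
          · simp [hx]
  simp only [transfer]
  rw [integral_finsetSum]
  · simp only [key]
    rw [← integral_finsetSum]
    · refine integral_congr_ae (Eventually.of_forall fun x => ?_)
      simp
    · intro s _
      have := continuous_coord_ite hF 0 {s}
      simp only [Finset.mem_singleton] at this
      exact integrable_of_continuous this μ
  · intro s _
    exact integrable_of_continuous
      ((hg.1.comp (continuous_prepend s)).mul (hF.comp (continuous_prepend s))) μ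

open Classical in
/-- Integrating the Gibbs sums against the `g`-measure recovers the measure of cylinders. -/
lemma integral_gibbsSum {g : (ℕ → S) → ℝ} (hg : IsGFunction g) {μ : Measure (ℕ → S)}
    (hμ : IsGMeasure g μ) (C : ℕ → Finset S) (n : ℕ) : ∀ {F : (ℕ → S) → ℝ}, Continuous F →
    ∫ x, gibbsSum g C n F x ∂μ = ∫ x, (if ∀ i < n, x i ∈ C i then F x else 0) ∂μ := by
  induction n with
  | zero => intro F _; simp [gibbsSum]
  | succ n ih =>
    intro F hF
    rw [gibbsSum, integral_transfer hg hμ (C n) (continuous_gibbsSum hg.1 hF C n)]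
    have h1 := fun z => gibbsSum_coord_ite g C n (C n) F 0 z
    simp only [add_zero] at h1
    simp only [← h1]
    rw [ih (continuous_coord_ite hF n (C n))]
    refine integral_congr_ae (Eventually.of_forall fun x => ?_)
    have : (∀ i < n + 1, x i ∈ C i) ↔ (∀ i < n, x i ∈ C i) ∧ x n ∈ C n := by
      constructor
      · exact fun h => ⟨fun i hi => h i (by omega), h n (by omega)⟩
      · rintro ⟨h, h'⟩ i hi
        rcases Nat.lt_succ_iff_lt_or_eq.1 hi with hi | rfl
        · exact h i hi
        · exact h'
    simp only [this]
    split_ifs <;> simp_all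

end Duality

/-! ### Conditional expectations of the factor measure -/

section Cylinders

variable {S : Type} [Fintype S] [MeasurableSpace S] [DiscreteMeasurableSpace S]

lemma measurableSet_cyl {S : Type} [MeasurableSpace S] [DiscreteMeasurableSpace S] (N : ℕ) (v : ℕ → S) :
    MeasurableSet {y : ℕ → S | ∀ i < N, y i = v i} := by
  simp only [Set.ofPred_forall]
  exact MeasurableSet.iInter fun i => MeasurableSet.iInter fun _ =>
    measurableSet_coord i (v i)

/-- Finite measures that are relatively close on long cylinders coincide. -/
lemma measure_eq_of_cyl_close [Nonempty S] {l₁ l₂ ν : Measure (ℕ → S)} [IsFiniteMeasure l₁]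
    [IsFiniteMeasure l₂] [IsProbabilityMeasure ν] {d : ℕ → ℝ} (hd0 : ∀ N, 0 ≤ d N)
    (hd : Tendsto d atTop (nhds 0))
    (h : ∀ (N : ℕ) (v : ℕ → S), |l₁.real {y | ∀ i < N, y i = v i} - l₂.real {y | ∀ i < N, y i = v i}| ≤
      d N * ν.real {y | ∀ i < N, y i = v i}) : l₁ = l₂ := by
  classical
  have main : ∀ n (B : Set (ℕ → S)),
      (∀ u v, (∀ i < n, u i = v i) → (u ∈ B ↔ v ∈ B)) → l₁.real B = l₂.real B := by
    intro n B hB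
    have hbound : ∀ N, n ≤ N → |l₁.real B - l₂.real B| ≤ d N := by
      intro N hN
      set ρ : (ℕ → S) → Fin N → S := fun y i => y i with hρ
      set E : Finset (Fin N → S) := Finset.univ.filter fun w => ∃ y ∈ B, ρ y = w with hE
      have hpre : ρ ⁻¹' (E : Set (Fin N → S)) = B := by
        ext y
        simp only [hE, Set.mem_preimage, Finset.coe_filter, Finset.mem_univ, true_and,
          Set.mem_ofPred_eq]
        constructor
        · rintro ⟨y', hy', he⟩
          exact (hB y' y fun i hi => congrFun he ⟨i, by omega⟩).1 hy'
        · exact fun hy => ⟨y, hy, rfl⟩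
      have hcyl : ∀ w : Fin N → S, ∃ v : ℕ → S, ρ ⁻¹' {w} = {y | ∀ i < N, y i = v i} := by
        intro w
        refine ⟨fun i => if hi : i < N then w ⟨i, hi⟩ else Classical.arbitrary S, ?_⟩
        ext y
        simp only [Set.mem_preimage, Set.mem_singleton_iff, Set.mem_ofPred_eq]
        constructor
        · rintro rfl i hi
          simp [hi, hρ]
        · intro hy
          funext i
          simpa [hρ] using hy i i.2
      have hms : ∀ w ∈ E, MeasurableSet (ρ ⁻¹' {w}) := by
        intro w _
        obtain ⟨v, hv⟩ := hcyl w
        rw [hv]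
        exact measurableSet_cyl N v
      rw [← hpre, ← sum_measureReal_preimage_singleton (μ := l₁) E hms,
        ← sum_measureReal_preimage_singleton (μ := l₂) E hms, ← Finset.sum_sub_distrib]
      calc |∑ w ∈ E, (l₁.real (ρ ⁻¹' {w}) - l₂.real (ρ ⁻¹' {w}))|
          ≤ ∑ w ∈ E, |l₁.real (ρ ⁻¹' {w}) - l₂.real (ρ ⁻¹' {w})| :=
            Finset.abs_sum_le_sum_abs _ _
        _ ≤ ∑ w ∈ E, d N * ν.real (ρ ⁻¹' {w}) := by
            refine Finset.sum_le_sum fun w _ => ?_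
            obtain ⟨v, hv⟩ := hcyl w
            rw [hv]
            exact h N v
        _ = d N * ν.real (ρ ⁻¹' (E : Set (Fin N → S))) := by
            rw [← Finset.mul_sum, sum_measureReal_preimage_singleton (μ := ν) E hms]
        _ ≤ d N := mul_le_of_le_one_right (hd0 N) measureReal_le_one
    have : |l₁.real B - l₂.real B| ≤ 0 :=
      ge_of_tendsto hd ((eventually_ge_atTop n).mono hbound)
    exact sub_eq_zero.1 (abs_nonpos_iff.1 this)
  have main' : ∀ n (B : Set (ℕ → S)),
      (∀ u v, (∀ i < n, u i = v i) → (u ∈ B ↔ v ∈ B)) → l₁ B = l₂ B := fun n B hB =>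
    (measureReal_eq_measureReal_iff).1 (main n B hB)
  refine ext_of_generate_finite _ (generateFrom_measurableCylinders (α := fun _ : ℕ => S)).symm
    isPiSystem_measurableCylinders (fun B hB => ?_) (main' 0 Set.univ (by simp))
  obtain ⟨s, E, -, rfl⟩ := (mem_measurableCylinders _).1 hB
  refine main' (s.sup id + 1) _ fun u v huv => ?_
  have : s.restrict u = s.restrict v := by
    funext i
    exact huv i (Nat.lt_succ_of_le (Finset.le_sup (f := id) i.2))
  rw [mem_cylinder, mem_cylinder, this]

end Cylinders

section FactorMeasure

variable {S S' : Type} [MeasurableSpace S'] [DiscreteMeasurableSpace S']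
  [Fintype S] [TopologicalSpace S] [DiscreteTopology S]
  [MeasurableSpace S] [DiscreteMeasurableSpace S]

/-- On a cylinder of length `N`, the conditional probability of the symbol `a` under the factor
measure is the finite-volume approximation up to the loss-of-memory bound: it is a weighted mean of
Gibbs averages over boundary conditions, each within that bound of the average at `z`. -/
lemma factor_cyl_close [Nonempty S] {g : (ℕ → S) → ℝ} (hg : IsGFunction g) (hgpos : ∀ x, 0 < g x)
    {r : ℕ → ℝ}
    (hr : ∀ n, 1 ≤ n → ∀ x y : ℕ → S,
      (∀ i, i < n → x i = y i) → |Real.log (g x) - Real.log (g y)| ≤ r n)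
    {μ : Measure (ℕ → S)} (hμ : IsGMeasure g μ) {p : S → S'} (hp : Function.Surjective p)
    (z : ℕ → S) (N : ℕ) (a : S') (v : ℕ → S') :
    |(μ.map fun (x : ℕ → S) (i : ℕ) => p (x i)).real
        (shift ⁻¹' {y | ∀ i < N, y i = v i} ∩ {y | y 0 = a}) -
      approxG g p z (N + 1) (prepend a v) *
        (μ.map fun (x : ℕ → S) (i : ℕ) => p (x i)).real (shift ⁻¹' {y | ∀ i < N, y i = v i})| ≤
      memoryBound r (N + 1) *
        (μ.map fun (x : ℕ → S) (i : ℕ) => p (x i)).real (shift ⁻¹' {y | ∀ i < N, y i = v i}) := by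
  classical
  have hprob := hμ.1
  have hq : Measurable fun (x : ℕ → S) (i : ℕ) => p (x i) :=
    measurable_pi_lambda _ fun i =>
      (Measurable.of_discrete (f := p)).comp (measurable_pi_apply i)
  have hB : MeasurableSet (shift ⁻¹' {y : ℕ → S' | ∀ i < N, y i = v i}) :=
    measurable_shift (measurableSet_cyl N v)
  set C := fibre p (prepend a v) with hC
  have hCne : ∀ i, (C i).Nonempty := fibre_nonempty hp _
  set F := headInd p a with hF
  have hFc : Continuous F := continuous_of_local 1 fun u v h => headInd_local p a u v (h 0 one_pos)
  set Q : Set (ℕ → S) :=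
    (fun (x : ℕ → S) (i : ℕ) => p (x i)) ⁻¹' (shift ⁻¹' {y : ℕ → S' | ∀ i < N, y i = v i}) with hQ
  have hQm : MeasurableSet Q := hq hB
  have hmemQ : ∀ x : ℕ → S, (∀ i < N + 1, x i ∈ C i) ↔ x ∈ Q := by
    intro x
    constructor
    · intro h i hi
      have := h (i + 1) (by omega)
      simp only [hC, fibre, Finset.mem_filter, Finset.mem_univ, true_and] at this
      exact this
    · rintro h (_ | i) hi
      · simp [hC, fibre]
      · simp only [hC, fibre, Finset.mem_filter, Finset.mem_univ, true_and]
        exact h i (by omega)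
  have hIntegral : ∀ {G : (ℕ → S) → ℝ}, Continuous G →
      ∫ x, gibbsSum g C (N + 1) G x ∂μ = ∫ x in Q, G x ∂μ := by
    intro G hG
    rw [integral_gibbsSum hg hμ C (N + 1) hG, ← integral_indicator hQm]
    refine integral_congr_ae (Eventually.of_forall fun x => ?_)
    simp only [hmemQ, Set.indicator_apply]
  have h1 : (μ.map fun (x : ℕ → S) (i : ℕ) => p (x i)).real
      (shift ⁻¹' {y | ∀ i < N, y i = v i}) =
      ∫ x, gibbsSum g C (N + 1) (fun _ => 1) x ∂μ := by
    rw [hIntegral continuous_const, map_measureReal_apply hq hB]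
    simp [hQ]
  have h2 : (μ.map fun (x : ℕ → S) (i : ℕ) => p (x i)).real
      (shift ⁻¹' {y | ∀ i < N, y i = v i} ∩ {y | y 0 = a}) =
      ∫ x, gibbsSum g C (N + 1) F x ∂μ := by
    have hA : MeasurableSet
        ((fun (x : ℕ → S) (i : ℕ) => p (x i)) ⁻¹' {y : ℕ → S' | y 0 = a}) :=
      hq (measurableSet_coord 0 a)
    have hFi : F = Set.indicator
        ((fun (x : ℕ → S) (i : ℕ) => p (x i)) ⁻¹' {y : ℕ → S' | y 0 = a}) fun _ => 1 := by
      funext x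
      simp only [hF, headInd, Set.indicator_apply]
      rfl
    rw [hIntegral hFc, map_measureReal_apply hq (hB.inter (measurableSet_coord 0 a)), hFi,
      setIntegral_indicator hA]
    simp [hQ, Set.preimage_inter]
  have hi1 : Integrable (gibbsSum g C (N + 1) fun _ => 1) μ :=
    integrable_of_continuous (continuous_gibbsSum hg.1 continuous_const C _) μ
  have hiF : Integrable (gibbsSum g C (N + 1) F) μ :=
    integrable_of_continuous (continuous_gibbsSum hg.1 hFc C _) μ
  rw [h1, h2, ← integral_const_mul, ← integral_const_mul, ← integral_sub hiF (hi1.const_mul _)]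
  refine (abs_integral_le_integral_abs).trans
    (integral_mono (hiF.sub (hi1.const_mul _)).abs (hi1.const_mul _) fun x => ?_)
  have hpos := gibbsSum_pos hgpos hCne (N + 1) (fun _ => one_pos) x
  have hm := gibbsAvg_abs_sub_le hgpos hr hCne (headInd_mem p a) (headInd_local p a) (N + 1) x z
  have e : gibbsSum g C (N + 1) F x =
      gibbsAvg g C (N + 1) F x * gibbsSum g C (N + 1) (fun _ => 1) x :=
    (div_mul_cancel₀ _ hpos.ne').symm
  have e' : approxG g p z (N + 1) (prepend a v) = gibbsAvg g C (N + 1) F z := rfl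
  simp only
  rw [e, e', ← sub_mul, abs_mul, abs_of_pos hpos]
  exact mul_le_mul_of_nonneg_right hm hpos.le

end FactorMeasure

/-- **Corollary 3.**  Let `g` be a (strictly positive) `g`-function on `S^ℕ` whose
variations `r_n = var_n log g` satisfy Berbee's condition
`∑_{n≥1} exp(-(r_1 + ⋯ + r_n)) = ∞`, let `μ` be a `g`-measure for `g`, and let
`π : S → S̃` be a surjection with induced one-block factor map `π̂`.  Then there is a
`g`-function `g̃` on `Y = S̃^ℕ` such that `μ∘π̂⁻¹` is a `g`-measure for `g̃`. -/
theorem factor_g_measure_of_berbee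
    {S S' : Type} [Fintype S] [Nontrivial S]
    [TopologicalSpace S] [DiscreteTopology S]
    [MeasurableSpace S] [DiscreteMeasurableSpace S]
    [Fintype S'] [TopologicalSpace S'] [DiscreteTopology S']
    [MeasurableSpace S'] [DiscreteMeasurableSpace S']
    (g : (ℕ → S) → ℝ) (hg : IsGFunction g) (hgpos : ∀ x, 0 < g x)
    -- `r n` is the variation `r_n = var_n (log g)` …
    (r : ℕ → ℝ)
    (hr : ∀ n, 1 ≤ n → ∀ x y : ℕ → S,
      (∀ i, i < n → x i = y i) → |Real.log (g x) - Real.log (g y)| ≤ r n)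
    -- … and it satisfies Berbee's condition:
    (hBerbee : ¬ Summable fun m : ℕ => Real.exp (-(∑ i ∈ Finset.Icc 1 m, r i)))
    (μ : Measure (ℕ → S)) (hμ : IsGMeasure g μ)
    (p : S → S') (hp : Function.Surjective p) :
    ∃ g' : (ℕ → S') → ℝ,
      IsGFunction g' ∧
      IsGMeasure g' (μ.map fun (x : ℕ → S) (i : ℕ) => p (x i)) := by
  classical
  have hne : Nonempty S := inferInstance
  have hne' : Nonempty S' := hne.map p
  set z : ℕ → S := fun _ => Classical.arbitrary S with hz
  obtain ⟨g', hg', hclose⟩ := exists_factor_gFunction hgpos hr hBerbee hp z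
  have hprob := hμ.1
  have hq : Measurable fun (x : ℕ → S) (i : ℕ) => p (x i) :=
    measurable_pi_lambda _ fun i =>
      (Measurable.of_discrete (f := p)).comp (measurable_pi_apply i)
  have hcyl := factor_cyl_close hg hgpos hr hμ hp z
  set ν : Measure (ℕ → S') := μ.map fun (x : ℕ → S) (i : ℕ) => p (x i) with hν
  have hνprob : IsProbabilityMeasure ν := Measure.isProbabilityMeasure_map hq.aemeasurable
  have hinv : ν.map shift = ν := by
    conv_rhs => rw [hν, ← hμ.2.1]
    rw [hν, Measure.map_map measurable_shift hq, Measure.map_map hq measurable_shift]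
    rfl
  refine ⟨g', hg', hνprob, hinv, fun a => ?_⟩
  have hga : Continuous fun y => g' (prepend a y) := hg'.1.comp (continuous_prepend a)
  have hgai : Integrable (fun y => g' (prepend a y)) ν := integrable_of_continuous hga ν
  set l₁ : Measure (ℕ → S') := ν.withDensity fun y => ENNReal.ofReal (g' (prepend a y)) with hl₁
  set l₂ : Measure (ℕ → S') := (ν.restrict {y | y 0 = a}).map shift with hl₂
  have hfin₁ : IsFiniteMeasure l₁ := isFiniteMeasure_withDensity_ofReal hgai.2
  have hl₁real : ∀ B, MeasurableSet B → l₁.real B = ∫ y in B, g' (prepend a y) ∂ν := by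
    intro B hB
    rw [measureReal_def, hl₁, withDensity_apply _ hB,
      ← ofReal_integral_eq_lintegral_ofReal hgai.integrableOn
        (Eventually.of_forall fun y => (hg'.2.1 _).1)]
    exact ENNReal.toReal_ofReal (integral_nonneg fun y => (hg'.2.1 _).1)
  have hl₂real : ∀ B, MeasurableSet B → l₂.real B = ν.real (shift ⁻¹' B ∩ {y | y 0 = a}) := by
    intro B hB
    rw [hl₂, map_measureReal_apply measurable_shift hB,
      measureReal_restrict_apply (measurable_shift hB)]
  have hshift : ∀ B, MeasurableSet B → ν.real (shift ⁻¹' B) = ν.real B := by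
    intro B hB
    rw [← map_measureReal_apply measurable_shift hB, hinv]
  have heq : l₁ = l₂ := by
    refine measure_eq_of_cyl_close (ν := ν) (d := fun N => 2 * memoryBound r (N + 1))
      (fun N => mul_nonneg zero_le_two (memoryBound_nonneg r _)) ?_ fun N v => ?_
    · have := ((tendsto_memoryBound hBerbee).comp (tendsto_add_atTop_nat 1)).const_mul 2
      rwa [mul_zero] at this
    · have hB := measurableSet_cyl N v
      have c₂ := hcyl N a v
      rw [hshift _ hB, ← hl₂real _ hB] at c₂
      have c₁ : |l₁.real {y | ∀ i < N, y i = v i} -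
          approxG g p z (N + 1) (prepend a v) * ν.real {y | ∀ i < N, y i = v i}| ≤
          memoryBound r (N + 1) * ν.real {y | ∀ i < N, y i = v i} := by
        have := norm_setIntegral_le_of_norm_le_const (μ := ν)
          (s := {y : ℕ → S' | ∀ i < N, y i = v i}) (C := memoryBound r (N + 1))
          (f := fun y => g' (prepend a y) - approxG g p z (N + 1) (prepend a v))
          (measure_lt_top _ _) (fun y hy => by
            have e : approxG g p z (N + 1) (prepend a v) =
                approxG g p z (N + 1) (prepend a y) := by
              refine approxG_local g p z (N + 1) _ _ rfl ?_
              rintro (_ | i) hi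
              · rfl
              · exact (hy i (by omega)).symm
            rw [e]
            exact hclose (N + 1) (prepend a y))
        rw [integral_sub hgai.integrableOn (integrable_const _), setIntegral_const,
          smul_eq_mul, mul_comm (ν.real _)] at this
        rw [hl₁real _ hB]
        exact this
      rw [abs_le] at c₁ c₂ ⊢
      constructor <;> linarith [c₁.1, c₁.2, c₂.1, c₂.2]
  have hm : MeasurableSpace.comap shift MeasurableSpace.pi ≤
      (MeasurableSpace.pi : MeasurableSpace (ℕ → S')) := measurable_shift.comap_le
  have hIntegral : Integrable (fun y : ℕ → S' => g' (prepend a (shift y))) ν := by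
    have : Integrable (fun y => g' (prepend a y)) (ν.map shift) := by rwa [hinv]
    exact this.comp_measurable measurable_shift
  refine ae_eq_condExp_of_forall_setIntegral_eq hm
    ((integrable_const 1).indicator (measurableSet_coord 0 a))
    (fun s _ _ => hIntegral.integrableOn) ?_
    (hga.measurable.comp (comap_measurable shift)).stronglyMeasurable.aestronglyMeasurable
  rintro _ ⟨B, hB, rfl⟩ -
  rw [setIntegral_indicator (measurableSet_coord 0 a), setIntegral_const, smul_eq_mul, mul_one,
    ← hl₂real B hB, ← heq, hl₁real B hB]
  conv_rhs => rw [← hinv]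
  exact (setIntegral_map hB hga.measurable.aestronglyMeasurable
    measurable_shift.aemeasurable).symm
end
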